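/- arXiv:1904.06613 — 2 statements merged into one kernel-verified Lean document; each statement's English description precedes it below -/
import Mathlib

section
/- Fix y in the Weyl group W and a reduced expression y = s_{i_1}⋯s_{i_l}; for 1 ≤ j ≤ l set β_j := s_{i_1}⋯s_{i_{j−1}}(α_{i_j}) (an element of Φ⁺). Then for every w ∈ W, the element Σ ħ^{l−k}·β_{j_1}β_{j_2}⋯β_{j_k} of the polynomial algebra Sym(V)[ħ], where the sum is over all sequences 1 ≤ j_1 < j_2 < ⋯ < j_k ≤ l with s_{i_{j_1}} s_{i_{j_2}} ⋯ s_{i_{j_k}} = w and the roots β_j are regarded as degree-one elements of Sym(V), does not depend on the choice of reduced expression for y. -/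
/-
STATEMENT 0: Fix y ∈ W and a reduced expression y = s_{i_1}⋯s_{i_l}; set
β_j := s_{i_1}⋯s_{i_{j−1}}(α_{i_j}) ∈ Φ⁺.  Then for every w ∈ W the element
Σ ħ^{l−k}·β_{j_1}⋯β_{j_k} of Sym(V)[ħ] — the sum over all 1 ≤ j_1 < ⋯ < j_k ≤ l with
s_{i_{j_1}}⋯s_{i_{j_k}} = w, the roots β_j regarded as degree-one elements of Sym(V) —
does not depend on the choice of reduced expression for y.

Since this version of Mathlib has no symmetric algebra, we use the universal property of
Sym(V)[ħ]: an element of Sym(V)[ħ] is determined by (and determines) its image under every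
ℝ-algebra map to a commutative ℝ-algebra A, i.e. under every choice of an ℝ-linear map
ι : V →ₗ[ℝ] A (extending to Sym(V)) together with an element ħ ∈ A.  The statement below is
therefore quantified over all such (A, ι, ħ), which is equivalent to the identity in Sym(V)[ħ].
-/

open scoped Classical

set_option maxHeartbeats 1000000
set_option synthInstance.maxHeartbeats 400000

noncomputable section

variable {n : ℕ} {W : Type*} [Group W] {M : CoxeterMatrix (Fin n)} (cs : CoxeterSystem M W)
variable {V : Type*} [AddCommGroup V] [Module ℝ V]

/-- For a word `ω = [i_1, …, i_l]` and a position `j` (0-indexed), the root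
`β_{j+1} = s_{i_1}⋯s_{i_j}(α_{i_{j+1}})`. -/
def betaRoot (σ : W →* (V ≃ₗ[ℝ] V)) (α : Fin n → V) (ω : List (Fin n)) (j : Fin ω.length) : V :=
  σ (cs.wordProd (ω.take j.val)) (α (ω.get j))

/-- The sum `Σ ħ^{l−k}·β_{j_1}⋯β_{j_k}` over all subsequences `j_1 < ⋯ < j_k` of positions
of the word `ω` such that `s_{i_{j_1}}⋯s_{i_{j_k}} = w`. -/
def billeyHbarSum (σ : W →* (V ≃ₗ[ℝ] V)) (α : Fin n → V)
    (A : Type*) [CommRing A] [Algebra ℝ A] (ι : V →ₗ[ℝ] A) (hbar : A)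
    (ω : List (Fin n)) (w : W) : A :=
  ∑ s : Finset (Fin ω.length),
    if cs.wordProd ((s.sort (· ≤ ·)).map ω.get) = w then
      hbar ^ (ω.length - s.card) * ∏ j ∈ s, ι (betaRoot cs σ α ω j)
    else 0

/-! ### Recursion for sums over subwords -/

theorem Fin.sum_finset_succ {N : Type*} [AddCommMonoid N] {m : ℕ}
    (f : Finset (Fin (m + 1)) → N) :
    ∑ s, f s = ∑ s : Finset (Fin m), f (s.map (Fin.succEmb m)) +
      ∑ s : Finset (Fin m), f (insert 0 (s.map (Fin.succEmb m))) := by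
  have himage : (Finset.univ.image Fin.succ : Finset (Fin (m + 1))).powerset
      = Finset.univ.map ⟨_, Finset.map_injective (Fin.succEmb m)⟩ := by
    rw [Finset.powerset_image, Finset.powerset_univ, Finset.map_eq_image]
    refine Finset.image_congr fun s _ => ?_
    simp [Finset.map_eq_image]
  have hzero : (0 : Fin (m + 1)) ∉ (Finset.univ.image Fin.succ : Finset (Fin (m + 1))) := by
    simp
  have huniv : (Finset.univ : Finset (Fin (m + 1))) = insert 0 (Finset.univ.image Fin.succ) := by
    ext j
    refine Fin.cases ?_ (fun k => ?_) j <;> simp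
  rw [← Finset.powerset_univ, huniv, Finset.sum_powerset_insert hzero, himage]
  simp

/-- The sum over the subwords of `ω` with product `w`, computed letter by letter; the roots are
those of the word `ω` transported by `y`. -/
def subwordSum (σ : W →* (V ≃ₗ[ℝ] V)) (α : Fin n → V) {A : Type*} [CommRing A] [Algebra ℝ A]
    (ι : V →ₗ[ℝ] A) (hbar : A) : W → List (Fin n) → W → A
  | _, [], w => if w = 1 then 1 else 0
  | y, i :: ω, w =>
      hbar * subwordSum σ α ι hbar (y * cs.simple i) ω w +
        ι (σ y (α i)) * subwordSum σ α ι hbar (y * cs.simple i) ω (cs.simple i * w)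

theorem sum_subwords_succ {A : Type*} [CommRing A] (hbar : A) {m : ℕ}
    (g : Fin (m + 1) → Fin n) (β : Fin (m + 1) → A) (w : W) :
    (∑ s : Finset (Fin (m + 1)),
      if cs.wordProd ((s.sort (· ≤ ·)).map g) = w then
        hbar ^ (m + 1 - s.card) * ∏ j ∈ s, β j else 0) =
      hbar * (∑ s : Finset (Fin m),
        if cs.wordProd ((s.sort (· ≤ ·)).map (g ∘ Fin.succ)) = w then
          hbar ^ (m - s.card) * ∏ j ∈ s, β j.succ else 0) +
      β 0 * ∑ s : Finset (Fin m),
        if cs.wordProd ((s.sort (· ≤ ·)).map (g ∘ Fin.succ)) = cs.simple (g 0) * w then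
          hbar ^ (m - s.card) * ∏ j ∈ s, β j.succ else 0 := by
  have hsort (s : Finset (Fin m)) :
      ((s.map (Fin.succEmb m)).sort (· ≤ ·)).map g = (s.sort (· ≤ ·)).map (g ∘ Fin.succ) := by
    rw [← Finset.map_sort (r := (· ≤ ·)) _ _ _ (by simp), List.map_map]
    rfl
  have hnot (s : Finset (Fin m)) : (0 : Fin (m + 1)) ∉ s.map (Fin.succEmb m) := by
    simp [Fin.succ_ne_zero]
  rw [Fin.sum_finset_succ, Finset.mul_sum, Finset.mul_sum]
  congr 1
  · refine Finset.sum_congr rfl fun s _ => ?_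
    have hcard : s.card ≤ m := by simpa using s.card_le_univ
    rw [hsort, Finset.card_map, Finset.prod_map, mul_ite, mul_zero, Nat.succ_sub hcard, pow_succ',
      mul_assoc]
    rfl
  · refine Finset.sum_congr rfl fun s _ => ?_
    rw [Finset.sort_insert _ (by simp) (hnot s), List.map_cons, hsort,
      Finset.card_insert_of_notMem (hnot s), Finset.card_map,
      Finset.prod_insert (hnot s), Finset.prod_map, mul_ite, mul_zero, cs.wordProd_cons,
      Nat.succ_sub_succ]
    refine if_congr ?_ (mul_left_comm _ _ _) rfl
    rw [← mul_right_inj (cs.simple (g 0)), cs.simple_mul_simple_cancel_left]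

theorem sum_subwords_eq_subwordSum (σ : W →* (V ≃ₗ[ℝ] V)) (α : Fin n → V)
    {A : Type*} [CommRing A] [Algebra ℝ A] (ι : V →ₗ[ℝ] A) (hbar : A)
    (ω : List (Fin n)) (y w : W) :
    (∑ s : Finset (Fin ω.length),
      if cs.wordProd ((s.sort (· ≤ ·)).map ω.get) = w then
        hbar ^ (ω.length - s.card) * ∏ j ∈ s, ι (σ y (betaRoot cs σ α ω j))
      else 0) = subwordSum cs σ α ι hbar y ω w := by
  induction ω generalizing y w with
  | nil =>
    have hempty (s : Finset (Fin ([] : List (Fin n)).length)) : s = ∅ :=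
      Finset.eq_empty_iff_forall_notMem.mpr fun j => j.elim0
    rw [subwordSum, Finset.sum_eq_single ∅ (fun s _ hs => absurd (hempty s) hs)
      (fun h => absurd (Finset.mem_univ _) h)]
    simp [eq_comm]
  | cons i ω ih =>
    have hβ (j : Fin ω.length) :
        σ y (betaRoot cs σ α (i :: ω) j.succ) = σ (y * cs.simple i) (betaRoot cs σ α ω j) := by
      simp [betaRoot, cs.wordProd_cons, map_mul]
    have hβ₀ : betaRoot cs σ α (i :: ω) (0 : Fin (ω.length + 1)) = α i := by
      simp [betaRoot]
    refine (sum_subwords_succ cs hbar (m := ω.length) (i :: ω).get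
      (fun j => ι (σ y (betaRoot cs σ α (i :: ω) j))) w).trans ?_
    simp only [hβ, hβ₀]
    rw [subwordSum, ← ih, ← ih]
    rfl

theorem billeyHbarSum_eq_subwordSum (σ : W →* (V ≃ₗ[ℝ] V)) (α : Fin n → V)
    {A : Type*} [CommRing A] [Algebra ℝ A] (ι : V →ₗ[ℝ] A) (hbar : A)
    (ω : List (Fin n)) (w : W) :
    billeyHbarSum cs σ α A ι hbar ω w = subwordSum cs σ α ι hbar 1 ω w := by
  rw [← sum_subwords_eq_subwordSum]
  simp [billeyHbarSum]

theorem subwordSum_append_singleton (σ : W →* (V ≃ₗ[ℝ] V)) (α : Fin n → V)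
    {A : Type*} [CommRing A] [Algebra ℝ A] (ι : V →ₗ[ℝ] A) (hbar : A)
    (ω : List (Fin n)) (i : Fin n) (y w : W) :
    subwordSum cs σ α ι hbar y (ω ++ [i]) w =
      hbar * subwordSum cs σ α ι hbar y ω w +
        ι (σ (y * cs.wordProd ω) (α i)) * subwordSum cs σ α ι hbar y ω (w * cs.simple i) := by
  induction ω generalizing y w with
  | nil =>
    have h : cs.simple i * w = 1 ↔ w * cs.simple i = 1 := mul_eq_one_comm
    simp [subwordSum, h]
  | cons j ω ih =>
    simp only [List.cons_append, subwordSum, ih, cs.wordProd_cons, mul_assoc]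
    ring

theorem billeyHbarSum_nil (σ : W →* (V ≃ₗ[ℝ] V)) (α : Fin n → V)
    {A : Type*} [CommRing A] [Algebra ℝ A] (ι : V →ₗ[ℝ] A) (hbar : A) (w : W) :
    billeyHbarSum cs σ α A ι hbar [] w = if w = 1 then 1 else 0 := by
  rw [billeyHbarSum_eq_subwordSum, subwordSum]

theorem billeyHbarSum_append_singleton (σ : W →* (V ≃ₗ[ℝ] V)) (α : Fin n → V)
    {A : Type*} [CommRing A] [Algebra ℝ A] (ι : V →ₗ[ℝ] A) (hbar : A)
    (ω : List (Fin n)) (i : Fin n) (w : W) :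
    billeyHbarSum cs σ α A ι hbar (ω ++ [i]) w =
      hbar * billeyHbarSum cs σ α A ι hbar ω w +
        ι (σ (cs.wordProd ω) (α i)) * billeyHbarSum cs σ α A ι hbar ω (w * cs.simple i) := by
  simp only [billeyHbarSum_eq_subwordSum, subwordSum_append_singleton, one_mul]

theorem map_billeyHbarSum (σ : W →* (V ≃ₗ[ℝ] V)) (α : Fin n → V)
    {A B : Type*} [CommRing A] [Algebra ℝ A] [CommRing B] [Algebra ℝ B] (f : A →ₐ[ℝ] B)
    (ι : V →ₗ[ℝ] A) (hbar : A) (ω : List (Fin n)) (w : W) :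
    f (billeyHbarSum cs σ α A ι hbar ω w) =
      billeyHbarSum cs σ α B (f.toLinearMap ∘ₗ ι) (f hbar) ω w := by
  simp [billeyHbarSum, apply_ite f]

theorem billeyHbarSum_eq_zero_of_length_lt (σ : W →* (V ≃ₗ[ℝ] V)) (α : Fin n → V)
    {A : Type*} [CommRing A] [Algebra ℝ A] (ι : V →ₗ[ℝ] A) (hbar : A)
    (ω : List (Fin n)) (w : W) (hw : ω.length < cs.length w) :
    billeyHbarSum cs σ α A ι hbar ω w = 0 := by
  refine Finset.sum_eq_zero fun s _ => if_neg fun h => ?_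
  have h₁ := cs.length_wordProd_le ((s.sort (· ≤ ·)).map ω.get)
  have h₂ : s.card ≤ ω.length := by simpa using s.card_le_univ
  rw [h, List.length_map, Finset.length_sort] at h₁
  omega

/-! ### Positive systems and reflections -/

/-- The properties of a root system that are used below: `σ` is a faithful representation of `W`
in which `s_i` is the reflection with root `α i` and coroot `αv i`, and `Φp` is a finite
spanning set of positive roots. -/
structure IsPositiveSystem (σ : W →* (V ≃ₗ[ℝ] V)) (Φp : Finset V) (α : Fin n → V)
    (αv : Fin n → (V →ₗ[ℝ] ℝ)) : Prop where
  faithful : Function.Injective σ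
  simple_mem : ∀ i, α i ∈ Φp
  span_eq_top : Submodule.span ℝ (Φp : Set V) = ⊤
  apply_simple : ∀ (i : Fin n) (v : V), σ (cs.simple i) v = v - αv i v • α i
  coroot_root : ∀ i, αv i (α i) = 2
  simple_perm : ∀ i, ∀ b ∈ Φp, b ≠ α i → σ (cs.simple i) b ∈ Φp
  neg_notMem : ∀ b ∈ Φp, -b ∉ Φp

/-- `p.1` acts as the reflection with root `b` and coroot `p.2`. -/
def IsReflectionAlong (σ : W →* (V ≃ₗ[ℝ] V)) (b : V) (p : W × (V →ₗ[ℝ] ℝ)) : Prop :=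
  (∀ x, σ p.1 x = x - p.2 x • b) ∧ p.2 b = 2

/-- A reflection in `W` with root `b` together with its coroot, or `(1, 0)` if there is none. -/
def reflectionAlong (σ : W →* (V ≃ₗ[ℝ] V)) (b : V) : W × (V →ₗ[ℝ] ℝ) :=
  if h : ∃ p, IsReflectionAlong σ b p then h.choose else (1, 0)

theorem IsReflectionAlong.conj {σ : W →* (V ≃ₗ[ℝ] V)} {b : V} {p : W × (V →ₗ[ℝ] ℝ)}
    (h : IsReflectionAlong σ b p) (v : W) :
    IsReflectionAlong σ (σ v b) (v * p.1 * v⁻¹, p.2 ∘ₗ (σ v⁻¹).toLinearMap) := by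
  have hv (x : V) : σ v (σ v⁻¹ x) = x := by
    rw [← LinearEquiv.mul_apply, ← map_mul]; simp
  refine ⟨fun x => ?_, by simp [h.2]⟩
  simp only [map_mul, LinearEquiv.mul_apply, h.1, map_sub, map_smul, hv]
  rfl

namespace IsPositiveSystem

variable {cs} {σ : W →* (V ≃ₗ[ℝ] V)} {Φp : Finset V} {α : Fin n → V} {αv : Fin n → (V →ₗ[ℝ] ℝ)}

theorem ne_zero (h : IsPositiveSystem cs σ Φp α αv) {b : V} (hb : b ∈ Φp) : b ≠ 0 := by
  rintro rfl
  exact h.neg_notMem 0 hb (by simpa using hb)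

theorem simple_apply_simple (_h : IsPositiveSystem cs σ Φp α αv) (i : Fin n) (v : V) :
    σ (cs.simple i) (σ (cs.simple i) v) = v := by
  rw [← LinearEquiv.mul_apply, ← map_mul]; simp

theorem simple_apply_root (h : IsPositiveSystem cs σ Φp α αv) (i : Fin n) :
    σ (cs.simple i) (α i) = -α i := by
  rw [h.apply_simple, h.coroot_root, two_smul]; abel

theorem isReflectionAlong_simple (h : IsPositiveSystem cs σ Φp α αv) (i : Fin n) :
    IsReflectionAlong σ (α i) (cs.simple i, αv i) :=
  ⟨h.apply_simple i, h.coroot_root i⟩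

theorem apply_mem_or_neg_apply_mem (h : IsPositiveSystem cs σ Φp α αv) (w : W) {b : V}
    (hb : b ∈ Φp) : σ w b ∈ Φp ∨ -σ w b ∈ Φp := by
  induction w using cs.simple_induction_left with
  | one => simp [hb]
  | mul_simple_left w i ih =>
    rw [map_mul, LinearEquiv.mul_apply]
    by_cases hα : σ w b = α i
    · right; rw [hα, h.simple_apply_root, neg_neg]; exact h.simple_mem i
    by_cases hα' : -σ w b = α i
    · left; rw [← neg_neg (σ w b), hα', map_neg, h.simple_apply_root, neg_neg]
      exact h.simple_mem i
    rcases ih with ih | ih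
    · exact Or.inl (h.simple_perm i _ ih hα)
    · right; rw [← map_neg]; exact h.simple_perm i _ ih hα'

theorem neg_apply_mem_iff (h : IsPositiveSystem cs σ Φp α αv) (w : W) {b : V}
    (hb : b ∈ Φp) : -σ w b ∈ Φp ↔ σ w b ∉ Φp :=
  ⟨fun h' h'' => h.neg_notMem _ h'' h', (h.apply_mem_or_neg_apply_mem w hb).resolve_left⟩

/-- Two reflections in `W` with the same positive root coincide: their product is unipotent and
permutes the finite spanning set `Φp ∪ -Φp`. -/
theorem isReflectionAlong_unique (h : IsPositiveSystem cs σ Φp α αv) {b : V} (hb : b ∈ Φp)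
    {p q : W × (V →ₗ[ℝ] ℝ)} (hp : IsReflectionAlong σ b p) (hq : IsReflectionAlong σ b q) :
    p = q := by
  have hpow (k : ℕ) (x : V) :
      σ ((p.1 * q.1) ^ k) x = x + ((k : ℝ) * (q.2 x - p.2 x)) • b := by
    induction k with
    | zero => simp
    | succ k ih =>
      rw [pow_succ', map_mul, LinearEquiv.mul_apply, ih, map_mul, LinearEquiv.mul_apply, hq.1,
        hp.1]
      simp only [map_add, map_sub, map_smul, hp.2, hq.2, smul_eq_mul]
      push_cast
      module
  have hcoroot : p.2 = q.2 := by
    refine LinearMap.ext_on h.span_eq_top fun x hx => ?_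
    by_contra hne
    have hinj : Function.Injective fun k : ℕ => σ ((p.1 * q.1) ^ k) x := by
      intro k l hkl
      simp only [hpow, add_right_inj] at hkl
      have := smul_left_injective ℝ (h.ne_zero hb) hkl
      exact_mod_cast mul_right_cancel₀ (sub_ne_zero.mpr (Ne.symm hne)) this
    refine Set.infinite_of_injective_forall_mem hinj
      (s := ((Φp ∪ Φp.image Neg.neg : Finset V) : Set V)) (fun k => ?_) (Finset.finite_toSet _)
    rcases h.apply_mem_or_neg_apply_mem ((p.1 * q.1) ^ k) hx with hk | hk
    · exact Finset.mem_union_left _ hk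
    · exact Finset.mem_union_right _ (Finset.mem_image.mpr ⟨_, hk, neg_neg _⟩)
  refine Prod.ext (h.faithful (LinearEquiv.ext fun x => ?_)) hcoroot
  rw [hp.1, hq.1, hcoroot]

theorem reflectionAlong_eq (h : IsPositiveSystem cs σ Φp α αv) {b : V} (hb : b ∈ Φp)
    {p : W × (V →ₗ[ℝ] ℝ)} (hp : IsReflectionAlong σ b p) : reflectionAlong σ b = p := by
  have hex : ∃ p, IsReflectionAlong σ b p := ⟨p, hp⟩
  rw [reflectionAlong, dif_pos hex]
  exact h.isReflectionAlong_unique hb hex.choose_spec hp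

theorem reflectionAlong_simple (h : IsPositiveSystem cs σ Φp α αv) (i : Fin n) :
    reflectionAlong σ (α i) = (cs.simple i, αv i) :=
  h.reflectionAlong_eq (h.simple_mem i) (h.isReflectionAlong_simple i)

theorem reflectionAlong_simple_apply (h : IsPositiveSystem cs σ Φp α αv) (i : Fin n) {b : V}
    (hb : b ∈ Φp) (hne : b ≠ α i) :
    reflectionAlong σ (σ (cs.simple i) b) =
      (cs.simple i * (reflectionAlong σ b).1 * cs.simple i,
        (reflectionAlong σ b).2 ∘ₗ (σ (cs.simple i)).toLinearMap) := by
  by_cases hex : ∃ p, IsReflectionAlong σ b p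
  · obtain ⟨p, hp⟩ := hex
    rw [h.reflectionAlong_eq hb hp,
      h.reflectionAlong_eq (h.simple_perm i b hb hne) (hp.conj (cs.simple i)), cs.inv_simple]
  · have hex' : ¬ ∃ p, IsReflectionAlong σ (σ (cs.simple i) b) p := by
      rintro ⟨p, hp⟩
      have := hp.conj (cs.simple i)
      rw [h.simple_apply_simple] at this
      exact hex ⟨_, this⟩
    rw [reflectionAlong, dif_neg hex', reflectionAlong, dif_neg hex]
    simp

/-- A reflection whose root is made negative by `w` shortens `w`. -/
theorem length_mul_lt (h : IsPositiveSystem cs σ Φp α αv) (w : W) {b : V} (hb : b ∈ Φp)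
    {p : W × (V →ₗ[ℝ] ℝ)} (hp : IsReflectionAlong σ b p) (hw : -σ w b ∈ Φp) :
    cs.length (w * p.1) < cs.length w := by
  have key : ∀ (ω : List (Fin n)) (b : V) (p : W × (V →ₗ[ℝ] ℝ)), b ∈ Φp →
      IsReflectionAlong σ b p → -σ (cs.wordProd ω) b ∈ Φp →
      cs.length (cs.wordProd ω * p.1) < ω.length := by
    intro ω
    induction ω using List.reverseRecOn with
    | nil =>
      intro b p hb _ hneg
      exact absurd (by simpa using hneg) (h.neg_notMem b hb)
    | append_singleton ω i ih =>
      intro b p hb hp hneg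
      rw [cs.wordProd_append, cs.wordProd_singleton] at hneg ⊢
      rw [List.length_append, List.length_singleton]
      by_cases hbi : b = α i
      · subst hbi
        rw [h.isReflectionAlong_unique hb hp (h.isReflectionAlong_simple i),
          cs.simple_mul_simple_cancel_right]
        exact Nat.lt_succ_of_le (cs.length_wordProd_le ω)
      · rw [map_mul, LinearEquiv.mul_apply] at hneg
        have hlt := ih _ _ (h.simple_perm i b hb hbi) (hp.conj (cs.simple i)) hneg
        have hle := cs.length_mul_le
          (cs.wordProd ω * (cs.simple i * p.1 * (cs.simple i)⁻¹)) (cs.simple i)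
        simp only [mul_assoc, inv_mul_cancel, mul_one, cs.length_simple] at hle hlt ⊢
        omega
  obtain ⟨ω, hω, rfl⟩ := cs.exists_isReduced w
  rw [hω.eq]
  exact key ω b p hb hp hw

theorem length_lt_length_mul (h : IsPositiveSystem cs σ Φp α αv) (w : W) {b : V} (hb : b ∈ Φp)
    {p : W × (V →ₗ[ℝ] ℝ)} (hp : IsReflectionAlong σ b p) (hw : σ w b ∈ Φp) :
    cs.length w < cs.length (w * p.1) := by
  have hpb : σ p.1 b = -b := by rw [hp.1, hp.2, two_smul]; abel
  have hsq : p.1 * p.1 = 1 := by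
    refine h.faithful (LinearEquiv.ext fun x => ?_)
    rw [map_mul, LinearEquiv.mul_apply, hp.1 x, map_sub, map_smul, hpb, hp.1 x]
    simp
  have := h.length_mul_lt (w * p.1) hb hp (by
    rwa [map_mul, LinearEquiv.mul_apply, hpb, map_neg, neg_neg])
  rwa [mul_assoc, hsq, mul_one] at this

/-! ### The eigenvector equation -/

variable {A : Type*} [CommRing A] [Algebra ℝ A]

theorem sum_coroot_mul_simple (h : IsPositiveSystem cs σ Φp α αv) (F : W → A) (i : Fin n)
    (w : W) (x : V) :
    (∑ b ∈ Φp, if σ w b ∈ Φp then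
        (reflectionAlong σ b).2 x • F (w * (reflectionAlong σ b).1 * cs.simple i) else 0) =
      (∑ b ∈ Φp, if σ (w * cs.simple i) b ∈ Φp then
        (reflectionAlong σ b).2 (σ (cs.simple i) x) •
          F (w * cs.simple i * (reflectionAlong σ b).1) else 0) + αv i x • F w := by
  have hmem {b : V} (hb : b ∈ Φp.erase (α i)) : σ (cs.simple i) b ∈ Φp.erase (α i) := by
    rw [Finset.mem_erase] at hb ⊢
    refine ⟨fun hα => h.neg_notMem _ (h.simple_mem i) ?_, h.simple_perm i b hb.2 hb.1⟩
    rw [← h.simple_apply_root, ← hα, h.simple_apply_simple]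
    exact hb.2
  rw [← Finset.add_sum_erase _ _ (h.simple_mem i), ← Finset.add_sum_erase _ _ (h.simple_mem i)]
  have herase : (∑ b ∈ Φp.erase (α i), if σ w b ∈ Φp then
        (reflectionAlong σ b).2 x • F (w * (reflectionAlong σ b).1 * cs.simple i) else 0) =
      ∑ b ∈ Φp.erase (α i), if σ (w * cs.simple i) b ∈ Φp then
        (reflectionAlong σ b).2 (σ (cs.simple i) x) •
          F (w * cs.simple i * (reflectionAlong σ b).1) else 0 := by
    refine Finset.sum_nbij' (σ (cs.simple i)) (σ (cs.simple i)) (fun b => hmem) (fun b => hmem)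
      (fun b _ => h.simple_apply_simple i b) (fun b _ => h.simple_apply_simple i b)
      fun b hb => ?_
    rw [Finset.mem_erase] at hb
    rw [h.reflectionAlong_simple_apply i hb.2 hb.1, map_mul, LinearEquiv.mul_apply,
      h.simple_apply_simple]
    simp [h.simple_apply_simple, mul_assoc]
  have hα : σ (w * cs.simple i) (α i) = -σ w (α i) := by
    rw [map_mul, LinearEquiv.mul_apply, h.simple_apply_root, map_neg]
  have hαv : αv i (σ (cs.simple i) x) = -αv i x := by
    rw [h.apply_simple, map_sub, map_smul, h.coroot_root, smul_eq_mul]; ring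
  rw [herase, h.reflectionAlong_simple, hα]
  simp only [h.neg_apply_mem_iff w (h.simple_mem i), hαv, cs.simple_mul_simple_cancel_right]
  by_cases hw : σ w (α i) ∈ Φp
  · simp [hw, add_comm]
  · simp [hw, add_comm]

/-- As a function on `W`, the sum attached to a word for `y` is a joint eigenvector, with
eigenvalues `ι (σ y x)`, of the operators by which `V` acts on the principal series of the
graded Hecke algebra. -/
theorem eigenvector_billeyHbarSum (h : IsPositiveSystem cs σ Φp α αv) (ι : V →ₗ[ℝ] A) (hbar : A)
    (ω : List (Fin n)) (w : W) (x : V) :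
    ι (σ w x) * billeyHbarSum cs σ α A ι hbar ω w -
      hbar * (∑ b ∈ Φp, if σ w b ∈ Φp then (reflectionAlong σ b).2 x •
        billeyHbarSum cs σ α A ι hbar ω (w * (reflectionAlong σ b).1) else 0) =
      ι (σ (cs.wordProd ω) x) * billeyHbarSum cs σ α A ι hbar ω w := by
  induction ω using List.reverseRecOn generalizing w x with
  | nil =>
    have hsum : (∑ b ∈ Φp, if σ w b ∈ Φp then (reflectionAlong σ b).2 x •
        billeyHbarSum cs σ α A ι hbar [] (w * (reflectionAlong σ b).1) else 0) = 0 := by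
      refine Finset.sum_eq_zero fun b hb => ite_eq_right_iff.mpr fun hw => ?_
      by_cases hex : ∃ p, IsReflectionAlong σ b p
      · obtain ⟨p, hp⟩ := hex
        have hlt := h.length_lt_length_mul w hb hp hw
        rw [h.reflectionAlong_eq hb hp, billeyHbarSum_eq_zero_of_length_lt, smul_zero]
        exact (Nat.zero_le _).trans_lt hlt
      · simp [reflectionAlong, hex]
    rw [hsum, billeyHbarSum_nil]
    by_cases hw : w = 1 <;> simp [hw]
  | append_singleton ω i ih =>
    simp only [billeyHbarSum_append_singleton]
    set F := billeyHbarSum cs σ α A ι hbar ω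
    set c := ι (σ (cs.wordProd ω) (α i))
    have hsplit : (∑ b ∈ Φp, if σ w b ∈ Φp then (reflectionAlong σ b).2 x •
          (hbar * F (w * (reflectionAlong σ b).1) +
            c * F (w * (reflectionAlong σ b).1 * cs.simple i)) else 0) =
        hbar * (∑ b ∈ Φp, if σ w b ∈ Φp then (reflectionAlong σ b).2 x •
          F (w * (reflectionAlong σ b).1) else 0) +
        c * (∑ b ∈ Φp, if σ w b ∈ Φp then (reflectionAlong σ b).2 x •
          F (w * (reflectionAlong σ b).1 * cs.simple i) else 0) := by
      rw [Finset.mul_sum, Finset.mul_sum, ← Finset.sum_add_distrib]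
      refine Finset.sum_congr rfl fun b _ => ?_
      split_ifs
      · rw [smul_add, mul_smul_comm, mul_smul_comm]
      · simp
    have h₁ := ih w x
    have h₂ := ih (w * cs.simple i) (σ (cs.simple i) x)
    rw [map_mul σ w, LinearEquiv.mul_apply, h.simple_apply_simple, ← map_mul] at h₂
    have hy : ι (σ (cs.wordProd ω) (σ (cs.simple i) x)) =
        ι (σ (cs.wordProd ω) x) - algebraMap ℝ A (αv i x) * c := by
      rw [h.apply_simple, map_sub, map_smul, map_sub, map_smul, Algebra.smul_def]
    rw [hsplit, h.sum_coroot_mul_simple, cs.wordProd_append, cs.wordProd_singleton,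
      map_mul σ (cs.wordProd ω), LinearEquiv.mul_apply, hy, Algebra.smul_def]
    rw [hy] at h₂
    linear_combination hbar * h₁ + c * h₂

/-! ### The leading coefficient -/

theorem billeyHbarSum_wordProd (h : IsPositiveSystem cs σ Φp α αv) (ι : V →ₗ[ℝ] A) (hbar : A)
    (ω : List (Fin n)) (hω : cs.IsReduced ω) :
    billeyHbarSum cs σ α A ι hbar ω (cs.wordProd ω) =
      ∏ b ∈ Φp with -σ (cs.wordProd ω)⁻¹ b ∈ Φp, ι b := by
  induction ω using List.reverseRecOn with
  | nil =>
    rw [billeyHbarSum_nil, Finset.filter_false_of_mem fun b hb => by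
      simpa using h.neg_notMem b hb]
    simp
  | append_singleton ω i ih =>
    have hred : cs.IsReduced ω := by simpa using hω.take ω.length
    have hlen : cs.length (cs.wordProd ω * cs.simple i) = ω.length + 1 := by
      simpa [cs.wordProd_append] using hω.eq
    rw [billeyHbarSum_append_singleton, cs.wordProd_append, cs.wordProd_singleton,
      cs.simple_mul_simple_cancel_right, ih hred,
      billeyHbarSum_eq_zero_of_length_lt _ _ _ _ _ _ _ (by omega), mul_zero, zero_add]
    set y := cs.wordProd ω
    have hpos : σ y (α i) ∈ Φp := by
      refine (h.apply_mem_or_neg_apply_mem y (h.simple_mem i)).resolve_right fun hneg => ?_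
      have hlt := h.length_mul_lt y (h.simple_mem i) (h.isReflectionAlong_simple i) hneg
      have hle : cs.length y ≤ ω.length := cs.length_wordProd_le ω
      simp only [hlen] at hlt
      omega
    have hinv (v : V) : σ y⁻¹ (σ y v) = v := by
      rw [← LinearEquiv.mul_apply, ← map_mul]; simp
    have hinv' (v : V) : σ y (σ y⁻¹ v) = v := by
      rw [← LinearEquiv.mul_apply, ← map_mul]; simp
    have hnot : σ y (α i) ∉ Φp.filter fun b => -σ y⁻¹ b ∈ Φp := by
      simp [h.neg_notMem _ (h.simple_mem i)]
    rw [← Finset.prod_insert hnot]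
    refine Finset.prod_congr ?_ fun _ _ => rfl
    ext b
    rw [Finset.mem_insert, Finset.mem_filter, Finset.mem_filter, mul_inv_rev, cs.inv_simple,
      map_mul, LinearEquiv.mul_apply]
    by_cases hb : b = σ y (α i)
    · simp [hb, hpos, h.simple_apply_root, h.simple_mem]
    simp only [hb, false_or]
    refine and_congr_right fun hbΦ => ?_
    rw [← map_neg (σ (cs.simple i))]
    refine ⟨fun hm => h.simple_perm i _ hm fun hα => ?_, fun hm => ?_⟩
    · refine h.neg_notMem b hbΦ ?_
      rwa [← hinv' b, ← map_neg, hα]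
    · rw [← h.simple_apply_simple i (-σ y⁻¹ b)]
      refine h.simple_perm i _ hm fun hα => hb ?_
      have : -σ y⁻¹ b = -α i := by
        rw [← h.simple_apply_root, ← hα, h.simple_apply_simple]
      rw [← neg_injective this, hinv']

/-- Independence of the reduced word when `A` is a domain into which `V` embeds. -/
theorem billeyHbarSum_eq_of_injective [IsDomain A] (h : IsPositiveSystem cs σ Φp α αv)
    (ι : V →ₗ[ℝ] A) (hι : Function.Injective ι) (hbar : A) {ω ω' : List (Fin n)}
    (hω : cs.IsReduced ω) (hω' : cs.IsReduced ω') (heq : cs.wordProd ω = cs.wordProd ω') (w : W) :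
    billeyHbarSum cs σ α A ι hbar ω w = billeyHbarSum cs σ α A ι hbar ω' w := by
  have hlen : ω'.length = ω.length := by rw [← hω.eq, ← hω'.eq, heq]
  induction hk : ω.length + 1 - cs.length w using Nat.strong_induction_on generalizing w with
  | _ k ih =>
  subst hk
  by_cases hw : ω.length < cs.length w
  · rw [billeyHbarSum_eq_zero_of_length_lt _ _ _ _ _ _ _ hw,
      billeyHbarSum_eq_zero_of_length_lt _ _ _ _ _ _ _ (hlen ▸ hw)]
  by_cases hwy : w = cs.wordProd ω
  · subst hwy
    rw [h.billeyHbarSum_wordProd _ _ _ hω, heq, h.billeyHbarSum_wordProd _ _ _ hω']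
  obtain ⟨x, hx⟩ : ∃ x, σ w x ≠ σ (cs.wordProd ω) x := by
    by_contra! hall
    exact hwy (h.faithful (LinearEquiv.ext hall))
  have hsum : (∑ b ∈ Φp, if σ w b ∈ Φp then (reflectionAlong σ b).2 x •
        billeyHbarSum cs σ α A ι hbar ω (w * (reflectionAlong σ b).1) else 0) =
      ∑ b ∈ Φp, if σ w b ∈ Φp then (reflectionAlong σ b).2 x •
        billeyHbarSum cs σ α A ι hbar ω' (w * (reflectionAlong σ b).1) else 0 := by
    refine Finset.sum_congr rfl fun b hb => ?_
    split_ifs with hwb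
    · by_cases hex : ∃ p, IsReflectionAlong σ b p
      · obtain ⟨p, hp⟩ := hex
        have hlt := h.length_lt_length_mul w hb hp hwb
        rw [h.reflectionAlong_eq hb hp, ih _ (by omega) _ rfl]
      · simp [reflectionAlong, hex]
    · rfl
  have h₁ := h.eigenvector_billeyHbarSum ι hbar ω w x
  have h₂ := h.eigenvector_billeyHbarSum ι hbar ω' w x
  rw [← heq, ← hsum] at h₂
  refine mul_left_cancel₀ (sub_ne_zero.mpr (hι.ne hx)) ?_
  linear_combination h₁ - h₂

end IsPositiveSystem

theorem billeyHbarSum_independent_of_reduced_word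
    -- the reflection representation of W on V, faithful (W is the Weyl group of Φ)
    (σ : W →* (V ≃ₗ[ℝ] V)) (hfaith : Function.Injective σ)
    -- positive roots, simple roots, simple coroots
    (Φp : Finset V) (α : Fin n → V) (αv : Fin n → (V →ₗ[ℝ] ℝ))
    (hαmem : ∀ i, α i ∈ Φp)
    -- the roots span V
    (hspan : Submodule.span ℝ (Φp : Set V) = ⊤)
    -- reflection formula s_i(v) = v − ⟨v, α_i^∨⟩ α_i, with ⟨α_i, α_i^∨⟩ = 2
    (hrefl : ∀ (i : Fin n) (v : V), σ (cs.simple i) v = v - αv i v • α i)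
    (hpairself : ∀ i, αv i (α i) = 2)
    -- crystallographic condition
    (hcrys : ∀ i j, ∃ m : ℤ, αv i (α j) = (m : ℝ))
    -- s_i permutes the positive roots other than α_i
    (hperm : ∀ i, ∀ b ∈ Φp, b ≠ α i → σ (cs.simple i) b ∈ Φp)
    -- Φ⁺ and −Φ⁺ are disjoint, and the root system is reduced
    (hdisj : ∀ b ∈ Φp, -b ∉ Φp)
    (hreduced : ∀ b ∈ Φp, b + b ∉ Φp)
    -- the target algebra: Sym(V)[ħ] via its universal property
    (A : Type*) [CommRing A] [Algebra ℝ A] (ι : V →ₗ[ℝ] A) (hbar : A)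
    -- two reduced expressions of y
    (y : W) (ω ω' : List (Fin n))
    (hω : cs.wordProd ω = y) (hωred : ω.length = cs.length y)
    (hω' : cs.wordProd ω' = y) (hω'red : ω'.length = cs.length y)
    (w : W) :
    billeyHbarSum cs σ α A ι hbar ω w = billeyHbarSum cs σ α A ι hbar ω' w := by
  have h : IsPositiveSystem cs σ Φp α αv :=
    ⟨hfaith, hαmem, hspan, hrefl, hpairself, hperm, hdisj⟩
  let B := Module.Basis.ofVectorSpace ℝ V
  let U := MvPolynomial (Option (Module.Basis.ofVectorSpaceIndex ℝ V)) ℝ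
  let ι₀ : V →ₗ[ℝ] U := B.constr ℝ fun i => MvPolynomial.X (some i)
  have hι₀ : Function.Injective ι₀ := B.injective_constr_of_linearIndependent
    ((MvPolynomial.linearIndependent_X _ ℝ).comp some (Option.some_injective _))
  let f : U →ₐ[ℝ] A := MvPolynomial.aeval fun o => o.elim hbar fun i => ι (B i)
  have hf : f.toLinearMap ∘ₗ ι₀ = ι := B.ext fun i => by
    rw [LinearMap.comp_apply, B.constr_basis]
    exact MvPolynomial.aeval_X _ _
  have hf' : f (MvPolynomial.X none) = hbar := MvPolynomial.aeval_X _ _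
  have hred : cs.IsReduced ω := by rw [CoxeterSystem.IsReduced, hω, hωred]
  have hred' : cs.IsReduced ω' := by rw [CoxeterSystem.IsReduced, hω', hω'red]
  have key := congrArg f <| h.billeyHbarSum_eq_of_injective ι₀ hι₀ (MvPolynomial.X none)
    hred hred' (hω.trans hω'.symm) w
  rwa [map_billeyHbarSum, map_billeyHbarSum, hf, hf'] at key
end
end

section
/- Fix y in the Weyl group W and a reduced expression y = s_{i_1}⋯s_{i_l}; for 1 ≤ j ≤ l set β_j := s_{i_1}⋯s_{i_{j−1}}(α_{i_j}) (an element of Φ⁺). Then for every w ∈ W, the element Σ β_{j_1}β_{j_2}⋯β_{j_k} of Sym(V), where the sum is over all sequences 1 ≤ j_1 < j_2 < ⋯ < j_k ≤ l with k = ℓ(w) and s_{i_{j_1}} s_{i_{j_2}} ⋯ s_{i_{j_k}} = w (i.e. over reduced subwords of the chosen word representing w), does not depend on the choice of reduced expression for y (the AJS/Billey formula for the restriction of the equivariant Schubert class at the fixed point y is well defined). -/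
/-
STATEMENT 1: Fix y ∈ W and a reduced expression y = s_{i_1}⋯s_{i_l}; set
β_j := s_{i_1}⋯s_{i_{j−1}}(α_{i_j}) ∈ Φ⁺.  Then for every w ∈ W the element
Σ β_{j_1}⋯β_{j_k} of Sym(V) — the sum over all 1 ≤ j_1 < ⋯ < j_k ≤ l with k = ℓ(w) and
s_{i_{j_1}}⋯s_{i_{j_k}} = w (reduced subwords representing w) — does not depend on the
choice of reduced expression for y (AJS/Billey formula).

Since this version of Mathlib has no symmetric algebra, we use the universal property of
Sym(V): an element of Sym(V) is determined by (and determines) its image under every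
ℝ-algebra map to a commutative ℝ-algebra A, i.e. under every ℝ-linear map ι : V →ₗ[ℝ] A.
The statement below is quantified over all such (A, ι), which is equivalent to the
identity in Sym(V).
-/

open scoped Classical

set_option maxHeartbeats 1000000
set_option synthInstance.maxHeartbeats 400000

noncomputable section

variable {n : ℕ} {W : Type*} [Group W] {M : CoxeterMatrix (Fin n)} (cs : CoxeterSystem M W)
variable {V : Type*} [AddCommGroup V] [Module ℝ V]

/-- The sum `Σ β_{j_1}⋯β_{j_k}` over all subsequences `j_1 < ⋯ < j_k` of positions of the
word `ω` such that `k = ℓ(w)` and `s_{i_{j_1}}⋯s_{i_{j_k}} = w`, i.e. over reduced subwords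
of `ω` representing `w`. -/
def billeySum (σ : W →* (V ≃ₗ[ℝ] V)) (α : Fin n → V)
    (A : Type*) [CommRing A] [Algebra ℝ A] (ι : V →ₗ[ℝ] A)
    (ω : List (Fin n)) (w : W) : A :=
  ∑ s : Finset (Fin ω.length),
    if cs.wordProd ((s.sort (· ≤ ·)).map ω.get) = w ∧ s.card = cs.length w then
      ∏ j ∈ s, ι (betaRoot cs σ α ω j)
    else 0

/-- The geometric data of a Weyl group acting on `V`: a finite spanning set `Φp` of positive roots
containing the simple roots `α`, on which each simple reflection acts by permuting the positive
roots other than its own. -/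
structure IsPositiveSystem_s1 (σ : W →* (V ≃ₗ[ℝ] V)) (Φp : Finset V) (α : Fin n → V)
    (αv : Fin n → (V →ₗ[ℝ] ℝ)) : Prop where
  faithful : Function.Injective σ
  simple_mem : ∀ i, α i ∈ Φp
  span_eq_top : Submodule.span ℝ (Φp : Set V) = ⊤
  simple_apply : ∀ (i : Fin n) (v : V), σ (cs.simple i) v = v - αv i v • α i
  pairing_self : ∀ i, αv i (α i) = 2
  simple_apply_mem : ∀ i, ∀ b ∈ Φp, b ≠ α i → σ (cs.simple i) b ∈ Φp
  neg_notMem : ∀ b ∈ Φp, -b ∉ Φp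

namespace IsPositiveSystem_s1

variable {cs} {σ : W →* (V ≃ₗ[ℝ] V)} {Φp : Finset V} {α : Fin n → V} {αv : Fin n → (V →ₗ[ℝ] ℝ)}

theorem simple_apply_self (h : IsPositiveSystem_s1 cs σ Φp α αv) (i : Fin n) :
    σ (cs.simple i) (α i) = -α i := by
  rw [h.simple_apply, h.pairing_self, two_smul]
  abel

theorem apply_mem_or_neg_mem (h : IsPositiveSystem_s1 cs σ Φp α αv) (w : W) {b : V}
    (hb : b ∈ Φp ∨ -b ∈ Φp) : σ w b ∈ Φp ∨ -σ w b ∈ Φp := by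
  induction w using cs.simple_induction_left generalizing b with
  | one => simpa using hb
  | mul_simple_left w i ih =>
    rw [map_mul, LinearEquiv.mul_apply]
    have key : ∀ c ∈ Φp, σ (cs.simple i) c ∈ Φp ∨ -σ (cs.simple i) c ∈ Φp := by
      intro c hc
      by_cases hci : c = α i
      · right
        rw [hci, h.simple_apply_self, neg_neg]
        exact h.simple_mem i
      · exact Or.inl (h.simple_apply_mem i c hc hci)
    rcases ih hb with hc | hc
    · exact key _ hc
    · simpa [or_comm] using key _ hc

theorem _root_.Finset.finite_setOf_mem_or_neg_mem {E : Type*} [AddCommGroup E] (s : Finset E) :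
    {b | b ∈ s ∨ -b ∈ s}.Finite := by
  have : {b | b ∈ s ∨ -b ∈ s} = (s : Set E) ∪ -(s : Set E) := by ext; simp
  rw [this]
  exact s.finite_toSet.union s.finite_toSet.neg

theorem finite (h : IsPositiveSystem_s1 cs σ Φp α αv) : Finite W := by
  let Ψ : Set V := {b | b ∈ Φp ∨ -b ∈ Φp}
  have : Finite Ψ := Φp.finite_setOf_mem_or_neg_mem
  let F : W → (Φp → Ψ) := fun w b => ⟨σ w b, h.apply_mem_or_neg_mem w (Or.inl b.2)⟩
  refine Finite.of_injective F fun u v huv => h.faithful ?_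
  apply LinearEquiv.toLinearMap_injective
  refine LinearMap.ext_on h.span_eq_top fun b hb => ?_
  exact congrArg Subtype.val (congrFun huv ⟨b, hb⟩)

theorem conj_simple_apply (h : IsPositiveSystem_s1 cs σ Φp α αv) (u : W) (i : Fin n) (z : V) :
    σ (u * cs.simple i * u⁻¹) z = z - αv i (σ u⁻¹ z) • σ u (α i) := by
  have : σ u (σ u⁻¹ z) = z := by
    rw [← LinearEquiv.mul_apply, ← map_mul, mul_inv_cancel, map_one, LinearEquiv.coe_one, id]
  rw [map_mul, map_mul, LinearEquiv.mul_apply, LinearEquiv.mul_apply, h.simple_apply, map_sub,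
    map_smul, this]

theorem simple_ne_zero (h : IsPositiveSystem_s1 cs σ Φp α αv) (i : Fin n) : α i ≠ 0 := fun h0 => by
  simpa [h0] using h.pairing_self i

/-- Reflections with proportional roots coincide. -/
theorem conj_simple_eq_of_apply_eq_smul (h : IsPositiveSystem_s1 cs σ Φp α αv) {u v : W} {i j : Fin n}
    {c : ℝ} (huv : σ u (α i) = c • σ v (α j)) :
    u * cs.simple i * u⁻¹ = v * cs.simple j * v⁻¹ := by
  have inv_apply : ∀ (x : W) (z : V), σ x⁻¹ (σ x z) = z := fun x z => by
    rw [← LinearEquiv.mul_apply, ← map_mul, inv_mul_cancel, map_one, LinearEquiv.coe_one, id]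
  have hc : c ≠ 0 := by
    rintro rfl
    exact h.simple_ne_zero i (by simpa using huv)
  let Ψ : Set V := {b | b ∈ Φp ∨ -b ∈ Φp}
  have hspan : Submodule.span ℝ Ψ = ⊤ := by
    rw [eq_top_iff, ← h.span_eq_top]
    exact Submodule.span_mono fun b hb => Or.inl hb
  let f : Module.Dual ℝ V := αv i ∘ₗ (σ u⁻¹).toLinearMap
  let g : Module.Dual ℝ V := c⁻¹ • (αv j ∘ₗ (σ v⁻¹).toLinearMap)
  have hf : ∀ z, Module.preReflection (σ u (α i)) f z = σ (u * cs.simple i * u⁻¹) z := fun z => by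
    rw [h.conj_simple_apply, Module.preReflection_apply]
    rfl
  have hg : ∀ z, Module.preReflection (σ u (α i)) g z = σ (v * cs.simple j * v⁻¹) z := fun z => by
    rw [h.conj_simple_apply, Module.preReflection_apply, huv, smul_smul]
    congr 2
    simp [g]
    field_simp
  have hfg : f = g := by
    refine Module.Dual.eq_of_preReflection_mapsTo (x := σ u (α i))
      Φp.finite_setOf_mem_or_neg_mem hspan ?_ ?_ ?_ ?_
    · simp only [f, LinearMap.comp_apply, LinearEquiv.coe_coe, inv_apply, h.pairing_self]
    · intro z hz
      rw [hf]
      exact h.apply_mem_or_neg_mem _ hz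
    · simp only [g, huv, LinearMap.smul_apply, LinearMap.comp_apply, LinearEquiv.coe_coe, map_smul,
        inv_apply, h.pairing_self, smul_eq_mul]
      field_simp
    · intro z hz
      rw [hg]
      exact h.apply_mem_or_neg_mem _ hz
  apply h.faithful
  ext z
  rw [← hf, ← hg, hfg]

theorem length_wordProd_mul_simple_lt (h : IsPositiveSystem_s1 cs σ Φp α αv) (i : Fin n)
    (ω : List (Fin n)) (hω : σ (cs.wordProd ω) (α i) ∉ Φp) :
    cs.length (cs.wordProd ω * cs.simple i) < ω.length := by
  induction ω with
  | nil => exact absurd (h.simple_mem i) (by simpa using hω)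
  | cons j τ ih =>
    rw [cs.wordProd_cons] at hω ⊢
    rw [List.length_cons, mul_assoc]
    by_cases hτ : σ (cs.wordProd τ) (α i) ∈ Φp
    · have heq : σ (cs.wordProd τ) (α i) = (1 : ℝ) • σ 1 (α j) := by
        by_contra hne
        rw [one_smul, map_one, LinearEquiv.coe_one, id] at hne
        rw [map_mul, LinearEquiv.mul_apply] at hω
        exact hω (h.simple_apply_mem j _ hτ hne)
      have hconj := h.conj_simple_eq_of_apply_eq_smul heq
      rw [one_mul, inv_one, mul_one, mul_inv_eq_iff_eq_mul] at hconj
      rw [hconj, cs.simple_mul_simple_cancel_left]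
      exact Nat.lt_succ_of_le (cs.length_wordProd_le τ)
    · have h1 := ih hτ
      have h2 := cs.length_mul_le (cs.simple j) (cs.wordProd τ * cs.simple i)
      rw [cs.length_simple] at h2
      omega

/-- If right multiplication by `s_i` does not shorten `u`, then `u` keeps `α_i` positive. -/
theorem apply_simple_mem (h : IsPositiveSystem_s1 cs σ Φp α αv) {u : W} {i : Fin n}
    (hu : ¬ cs.IsRightDescent u i) : σ u (α i) ∈ Φp := by
  by_contra hneg
  obtain ⟨ω, hω, rfl⟩ := cs.exists_isReduced u
  exact hu (by simpa [CoxeterSystem.IsRightDescent, hω.eq]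
    using h.length_wordProd_mul_simple_lt i ω hneg)

end IsPositiveSystem_s1

section LeftOperator

variable {S : Type*} [CommRing S]

/-- The family representing the unit `u_1` of the nil-Coxeter algebra. -/
def unitFamily : W → S := Pi.single 1 1

/-- Right multiplication by `u_v` in the nil-Coxeter algebra. -/
def rightShift (v : W) (f : W → S) (w : W) : S :=
  if cs.length (w * v⁻¹) + cs.length v = cs.length w then f (w * v⁻¹) else 0

theorem rightShift_unitFamily (v : W) :
    rightShift cs v (unitFamily : W → S) = Pi.single v 1 := by
  ext w
  unfold rightShift unitFamily
  by_cases h : w = v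
  · subst h
    simp
  · have : w * v⁻¹ ≠ 1 := fun h' => h (mul_inv_eq_one.1 h')
    simp [h, this]

variable [Algebra ℝ S]

/-- The operator `f ↦ (1 + a_i u_i) s_i f` on families indexed by `W`, where a family `f` stands for
the element `∑ f w • u_w` of the nil-Coxeter algebra of `W` with coefficients in `S`. -/
def leftOp (T : W →* (S →ₐ[ℝ] S)) (a : Fin n → S) (i : Fin n) : Module.End ℝ (W → S) where
  toFun f w := T (cs.simple i) (f w) +
    if cs.IsLeftDescent w i then a i * T (cs.simple i) (f (cs.simple i * w)) else 0
  map_add' f g := by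
    ext w
    simp only [Pi.add_apply, map_add]
    split_ifs <;> ring
  map_smul' c f := by
    ext w
    simp only [Pi.smul_apply, map_smul, RingHom.id_apply, smul_add, mul_smul_comm]
    split_ifs <;> simp

theorem leftOp_apply (T : W →* (S →ₐ[ℝ] S)) (a : Fin n → S) (i : Fin n) (f : W → S) (w : W) :
    leftOp cs T a i f w = T (cs.simple i) (f w) +
      if cs.IsLeftDescent w i then a i * T (cs.simple i) (f (cs.simple i * w)) else 0 := rfl

/-- Composite of the operators `leftOp` along a word. -/
def wordOp (T : W →* (S →ₐ[ℝ] S)) (a : Fin n → S) (ω : List (Fin n)) : Module.End ℝ (W → S) :=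
  (ω.map (leftOp cs T a)).prod

variable (T : W →* (S →ₐ[ℝ] S)) (a : Fin n → S)

theorem act_simple_act_simple (i : Fin n) (p : S) : T (cs.simple i) (T (cs.simple i) p) = p := by
  rw [← AlgHom.mul_apply, ← map_mul, cs.simple_mul_simple_self, map_one, AlgHom.one_apply]

theorem leftOp_mul_self (ha : ∀ i, T (cs.simple i) (a i) = -a i) (i : Fin n) :
    leftOp cs T a i * leftOp cs T a i = 1 := by
  ext f w
  have hd := cs.isLeftDescent_iff_not_isLeftDescent_mul (w := w) (i := i)
  rw [Module.End.mul_apply, Module.End.one_apply, leftOp_apply, leftOp_apply, leftOp_apply]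
  by_cases hw : cs.IsLeftDescent w i
  · simp only [hw, hd.1 hw, if_true, if_false, map_add, map_mul, ha, add_zero,
      act_simple_act_simple]
    ring
  · simp [hw, act_simple_act_simple]

theorem leftOp_mul_coeff (i : Fin n) (c : S) (f : W → S) :
    leftOp cs T a i (fun w => c * f w) = fun w => T (cs.simple i) c * leftOp cs T a i f w := by
  ext w
  simp only [leftOp_apply, map_mul, mul_add]
  split_ifs <;> ring

theorem wordOp_mul_coeff (ω : List (Fin n)) (c : S) (f : W → S) :
    wordOp cs T a ω (fun w => c * f w) = fun w => T (cs.wordProd ω) c * wordOp cs T a ω f w := by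
  induction ω with
  | nil => simp [wordOp]
  | cons i ω ih =>
    simp only [wordOp, List.map_cons, List.prod_cons, Module.End.mul_apply] at ih ⊢
    rw [ih, leftOp_mul_coeff, cs.wordProd_cons, map_mul, AlgHom.mul_apply]

theorem leftOp_rightShift (i : Fin n) (v : W) (f : W → S) :
    leftOp cs T a i (rightShift cs v f) = rightShift cs v (leftOp cs T a i f) := by
  ext w
  have key : (cs.IsLeftDescent w i ∧
      cs.length (cs.simple i * w * v⁻¹) + cs.length v = cs.length (cs.simple i * w)) ↔
      (cs.length (w * v⁻¹) + cs.length v = cs.length w ∧ cs.IsLeftDescent (w * v⁻¹) i) := by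
    have h1 := cs.length_simple_mul w i
    have h2 := cs.length_simple_mul (w * v⁻¹) i
    have h3 := cs.length_mul_le (w * v⁻¹) v
    have h4 := cs.length_mul_le (cs.simple i * w * v⁻¹) v
    rw [inv_mul_cancel_right] at h3 h4
    rw [← mul_assoc] at h2
    unfold CoxeterSystem.IsLeftDescent
    rw [← mul_assoc]
    omega
  simp only [leftOp_apply, rightShift]
  rw [← mul_assoc]
  by_cases h1 : cs.length (w * v⁻¹) + cs.length v = cs.length w
  · by_cases h2 : cs.IsLeftDescent (w * v⁻¹) i
    · have h3 := key.2 ⟨h1, h2⟩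
      simp [h1, h2, h3.1, h3.2]
    · have h3 := mt key.1 fun x => h2 x.2
      rw [not_and] at h3
      by_cases h4 : cs.IsLeftDescent w i
      · simp [h1, h2, h4, h3 h4]
      · simp [h1, h2, h4]
  · have h3 := mt key.1 fun x => h1 x.1
    rw [not_and] at h3
    by_cases h4 : cs.IsLeftDescent w i
    · simp [h1, h4, h3 h4]
    · simp [h1, h4]

theorem wordOp_rightShift (ω : List (Fin n)) (v : W) (f : W → S) :
    wordOp cs T a ω (rightShift cs v f) = rightShift cs v (wordOp cs T a ω f) := by
  induction ω with
  | nil => simp [wordOp]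
  | cons i ω ih =>
    simp only [wordOp, List.map_cons, List.prod_cons, Module.End.mul_apply] at ih ⊢
    rw [ih, leftOp_rightShift]

/-- A word representing `1` acts by left multiplication by its value at `u_1`. -/
theorem wordOp_apply_of_wordProd_eq_one [Fintype W] {ω : List (Fin n)} (hω : cs.wordProd ω = 1)
    (f : W → S) (w : W) :
    wordOp cs T a ω f w = ∑ v, f v * rightShift cs v (wordOp cs T a ω unitFamily) w := by
  have hf : f = ∑ v, fun x => f v * rightShift cs v (unitFamily : W → S) x := by
    ext x
    simp [rightShift_unitFamily, Finset.sum_apply, Pi.single_apply]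
  conv_lhs => rw [hf]
  rw [map_sum, Finset.sum_apply]
  refine Finset.sum_congr rfl fun v _ => ?_
  rw [wordOp_mul_coeff, wordOp_rightShift, hω, map_one, AlgHom.one_apply]

theorem wordOp_eq_one_of_unitFamily [Fintype W] {ω : List (Fin n)} (hω : cs.wordProd ω = 1)
    (h : wordOp cs T a ω (unitFamily : W → S) = unitFamily) : wordOp cs T a ω = 1 := by
  refine LinearMap.ext fun f => funext fun w => ?_
  rw [wordOp_apply_of_wordProd_eq_one cs T a hω, h]
  simp [rightShift_unitFamily, Pi.single_apply]

/-- If a word representing `1` fixes `u_1` up to length `k`, then it changes the value of a family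
at an element of length at most `k` only through the value of that family at `1`. -/
theorem wordOp_apply_of_agree_below [Fintype W] {ω : List (Fin n)} (hω : cs.wordProd ω = 1) {k : ℕ}
    (hk : ∀ v, cs.length v < k → wordOp cs T a ω (unitFamily : W → S) v = unitFamily v)
    (f : W → S) {w : W} (hw1 : w ≠ 1) (hw : cs.length w = k) :
    wordOp cs T a ω f w = f w + f 1 * wordOp cs T a ω unitFamily w := by
  rw [wordOp_apply_of_wordProd_eq_one cs T a hω]
  have hterm : ∀ v, f v * rightShift cs v (wordOp cs T a ω unitFamily) w =
      (if v = w then f w else 0) +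
        (if v = 1 then f 1 * wordOp cs T a ω unitFamily w else 0) := by
    intro v
    by_cases hv : v = 1
    · subst hv
      simp [rightShift, hw1.symm]
    · have hlen : cs.length v ≠ 0 := fun h0 => hv (cs.length_eq_zero_iff.1 h0)
      have : rightShift cs v (wordOp cs T a ω (unitFamily : W → S)) w =
          rightShift cs v unitFamily w := by
        unfold rightShift
        split_ifs with hl
        · exact hk _ (by omega)
        · rfl
      rw [this, rightShift_unitFamily, Pi.single_apply]
      by_cases hvw : v = w
      · simp [hvw, hw1]
      · simp [hv, hvw, Ne.symm hvw]
  rw [Finset.sum_congr rfl fun v _ => hterm v, Finset.sum_add_distrib]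
  simp

/-- The product `β_1 ⋯ β_l` of the roots attached to a word. -/
def rootProd : List (Fin n) → S
  | [] => 1
  | i :: ω => a i * T (cs.simple i) (rootProd ω)

theorem wordOp_unitFamily_one (ω : List (Fin n)) :
    wordOp cs T a ω (unitFamily : W → S) 1 = 1 := by
  induction ω with
  | nil => simp [wordOp, unitFamily]
  | cons i ω ih =>
    simp only [wordOp, List.map_cons, List.prod_cons, Module.End.mul_apply] at ih ⊢
    rw [leftOp_apply, ih, if_neg (cs.not_isLeftDescent_one i), map_one, add_zero]

theorem wordOp_unitFamily_of_length_lt (ω : List (Fin n)) {w : W} (hw : ω.length < cs.length w) :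
    wordOp cs T a ω (unitFamily : W → S) w = 0 := by
  induction ω generalizing w with
  | nil =>
    have : w ≠ 1 := by
      rintro rfl
      simp at hw
    simp [wordOp, unitFamily, this]
  | cons i ω ih =>
    simp only [wordOp, List.map_cons, List.prod_cons, Module.End.mul_apply,
      List.length_cons] at ih hw ⊢
    have h1 := cs.length_simple_mul w i
    rw [leftOp_apply, ih (by omega), ih (by omega)]
    simp

theorem wordOp_unitFamily_of_length_eq (ω : List (Fin n)) {w : W} (hw : ω.length = cs.length w) :
    wordOp cs T a ω (unitFamily : W → S) w =
      if cs.wordProd ω = w then rootProd cs T a ω else 0 := by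
  induction ω generalizing w with
  | nil =>
    have : w = 1 := cs.length_eq_zero_iff.1 hw.symm
    simp [wordOp, unitFamily, this, rootProd]
  | cons i ω ih =>
    have hlt := wordOp_unitFamily_of_length_lt cs T a ω (w := w) (by rw [← hw]; simp)
    simp only [wordOp, List.map_cons, List.prod_cons, Module.End.mul_apply,
      List.length_cons] at ih hw hlt ⊢
    rw [leftOp_apply, hlt, map_zero, zero_add, cs.wordProd_cons, rootProd]
    have hle := cs.length_wordProd_le ω
    by_cases hd : cs.IsLeftDescent w i
    · have hd' := cs.isLeftDescent_iff.1 hd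
      rw [if_pos hd, ih (by omega)]
      have : cs.wordProd ω = cs.simple i * w ↔ cs.simple i * cs.wordProd ω = w := by
        rw [← cs.inv_simple i, eq_inv_mul_iff_mul_eq, cs.inv_simple]
      by_cases he : cs.simple i * cs.wordProd ω = w
      · rw [if_pos he, if_pos (this.2 he)]
      · rw [if_neg he, if_neg (fun h => he (this.1 h)), map_zero, mul_zero]
    · rw [if_neg hd, if_neg]
      rintro rfl
      apply hd
      unfold CoxeterSystem.IsLeftDescent
      rw [cs.simple_mul_simple_cancel_left]
      omega

theorem rootProd_eq_prod_inversions {σ : W →* (V ≃ₗ[ℝ] V)} {Φp : Finset V} {α : Fin n → V}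
    {αv : Fin n → (V →ₗ[ℝ] ℝ)} (h : IsPositiveSystem_s1 cs σ Φp α αv) (lin : V → S)
    (hlin : ∀ w v, T w (lin v) = lin (σ w v)) (ω : List (Fin n)) (hω : cs.IsReduced ω) :
    rootProd cs T (fun i => lin (α i)) ω =
      ∏ b ∈ Φp with σ (cs.wordProd ω)⁻¹ b ∉ Φp, lin b := by
  induction ω with
  | nil => simp [rootProd, Finset.filter_false_of_mem]
  | cons i ω ih =>
    have hred : cs.IsReduced ω := by simpa using hω.drop 1
    rw [rootProd, ih hred]
    set y := cs.wordProd ω with hy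
    have hprod : cs.wordProd (i :: ω) = cs.simple i * y := cs.wordProd_cons i ω
    have hpos : σ y⁻¹ (α i) ∈ Φp := by
      apply h.apply_simple_mem
      rw [← cs.isLeftDescent_inv_iff, inv_inv, cs.not_isLeftDescent_iff, ← hprod, hω.eq, hred.eq]
      rfl
    have hss : ∀ b, σ (cs.simple i) (σ (cs.simple i) b) = b := fun b => by
      rw [← LinearEquiv.mul_apply, ← map_mul, cs.simple_mul_simple_self, map_one,
        LinearEquiv.coe_one, id]
    have hinv : ∀ b, σ (cs.simple i * y)⁻¹ b = σ y⁻¹ (σ (cs.simple i) b) := fun b => by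
      rw [mul_inv_rev, cs.inv_simple, map_mul, LinearEquiv.mul_apply]
    have hset : (Φp.filter fun b => σ (cs.simple i * y)⁻¹ b ∉ Φp) =
        insert (α i) ((Φp.filter fun b => σ y⁻¹ b ∉ Φp).image (σ (cs.simple i))) := by
      ext b
      simp only [Finset.mem_filter, Finset.mem_insert, Finset.mem_image, hinv]
      constructor
      · rintro ⟨hb, hb'⟩
        by_cases hbi : b = α i
        · exact Or.inl hbi
        · exact Or.inr ⟨σ (cs.simple i) b, ⟨h.simple_apply_mem i b hb hbi, hb'⟩, hss b⟩
      · rintro (rfl | ⟨c, ⟨hc, hc'⟩, rfl⟩)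
        · refine ⟨h.simple_mem i, ?_⟩
          rw [h.simple_apply_self, map_neg]
          exact h.neg_notMem _ hpos
        · refine ⟨h.simple_apply_mem i c hc ?_, by rwa [hss]⟩
          rintro rfl
          exact hc' hpos
    have hnot : α i ∉ (Φp.filter fun b => σ y⁻¹ b ∉ Φp).image (σ (cs.simple i)) := by
      intro hmem
      obtain ⟨c, hc, hci⟩ := Finset.mem_image.1 hmem
      have : c = -α i := by rw [← hss c, hci, h.simple_apply_self]
      exact h.neg_notMem _ (h.simple_mem i) (this ▸ (Finset.mem_filter.1 hc).1)
    rw [hprod, hset, Finset.prod_insert hnot, Finset.prod_image (σ (cs.simple i)).injective.injOn,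
      map_prod]
    simp only [hlin]

end LeftOperator

section LeadingTerm

variable {S : Type*} [CommRing S] [Algebra ℝ S] (T : W →* (S →ₐ[ℝ] S)) (a : Fin n → S)

/-- The lowest-length correction term of a word representing `1` is negated by `s_i` as soon as
conjugation by the operator of `s_i` inverts the operator of the word. -/
theorem act_simple_leading_eq_neg [Fintype W] {ω : List (Fin n)} (hω : cs.wordProd ω = 1) {k : ℕ}
    (hk : ∀ v, cs.length v < k → wordOp cs T a ω (unitFamily : W → S) v = unitFamily v)
    {i : Fin n}
    (hconj : wordOp cs T a ω * leftOp cs T a i * wordOp cs T a ω = leftOp cs T a i)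
    {w : W} (hw1 : w ≠ 1) (hw : cs.length w = k) :
    T (cs.simple i) (wordOp cs T a ω unitFamily w) = -wordOp cs T a ω unitFamily w := by
  have hpos : cs.length w ≠ 0 := fun h0 => hw1 (cs.length_eq_zero_iff.1 h0)
  have happ := congrFun (LinearMap.congr_fun hconj (unitFamily : W → S)) w
  rw [Module.End.mul_apply, Module.End.mul_apply,
    wordOp_apply_of_agree_below cs T a hω hk _ hw1 hw] at happ
  have hone : leftOp cs T a i (wordOp cs T a ω unitFamily) 1 = 1 := by
    rw [leftOp_apply, hk 1 (by simp; omega), if_neg (cs.not_isLeftDescent_one i)]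
    simp [unitFamily]
  have hval : leftOp cs T a i (wordOp cs T a ω unitFamily) w =
      T (cs.simple i) (wordOp cs T a ω unitFamily w) + leftOp cs T a i unitFamily w := by
    have h0 : (unitFamily : W → S) w = 0 := by simp [unitFamily, hw1]
    rw [leftOp_apply, leftOp_apply, h0, map_zero, zero_add]
    congr 1
    split_ifs with hd
    · rw [hk _ (by unfold CoxeterSystem.IsLeftDescent at hd; omega)]
    · rfl
  rw [hone, hval, one_mul] at happ
  linear_combination happ

end LeadingTerm

section AlternatingProducts

variable {B G : Type*} [Monoid G]

/-- The word of length `m` alternating between `i` and `j` and starting with `i`. -/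
def alternatingFrom (i j : B) : ℕ → List B
  | 0 => []
  | m + 1 => i :: alternatingFrom j i m

theorem length_alternatingFrom (i j : B) (m : ℕ) : (alternatingFrom i j m).length = m := by
  induction m generalizing i j with
  | zero => rfl
  | succ m ih => simp [alternatingFrom, ih]

theorem mul_pow_mul_prod_alternatingFrom {f : B → G} {i j : B} (hi : f i * f i = 1)
    (hj : f j * f j = 1) (m : ℕ) :
    (f i * f j) ^ m * ((alternatingFrom j i m).map f).prod =
      ((alternatingFrom i j m).map f).prod := by
  induction m generalizing i j with
  | zero => simp [alternatingFrom]
  | succ m ih =>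
    rw [alternatingFrom, alternatingFrom, List.map_cons, List.prod_cons, List.map_cons,
      List.prod_cons, ← ih hj hi, pow_succ, ← mul_assoc, ← mul_assoc, mul_assoc _ _ (f j),
      hj, mul_one, ← mul_assoc]
    congr 1
    have hsemi : SemiconjBy (f i) (f j * f i) (f i * f j) := by simp [SemiconjBy, mul_assoc]
    exact (hsemi.pow_right m).eq.symm

theorem prod_map_flatten_replicate_pair (f : B → G) (i j : B) (m : ℕ) :
    ((List.replicate m [i, j]).flatten.map f).prod = (f i * f j) ^ m := by
  simp

theorem mul_pow_mul_left_mul_mul_pow {x y : G} (hx : x * x = 1) (hy : y * y = 1) (m : ℕ) :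
    (x * y) ^ m * x * (x * y) ^ m = x := by
  induction m with
  | zero => simp
  | succ m ih =>
    calc (x * y) ^ (m + 1) * x * (x * y) ^ (m + 1)
        = (x * y) ^ m * x * (y * (x * x) * y) * (x * y) ^ m := by
          nth_rewrite 1 [pow_succ]
          rw [pow_succ']
          simp only [mul_assoc]
      _ = x := by rw [hx, mul_one, hy, mul_one, ih]

theorem mul_pow_mul_right_mul_mul_pow {x y : G} (hx : x * x = 1) (hy : y * y = 1) (m : ℕ) :
    (x * y) ^ m * y * (x * y) ^ m = y := by
  induction m with
  | zero => simp
  | succ m ih =>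
    calc (x * y) ^ (m + 1) * y * (x * y) ^ (m + 1)
        = (x * y) ^ m * (x * (y * y) * x) * y * (x * y) ^ m := by
          nth_rewrite 1 [pow_succ]
          rw [pow_succ']
          simp only [mul_assoc]
      _ = y := by rw [hy, mul_one, hx, mul_one, ih]

end AlternatingProducts

section PolynomialAction

open MvPolynomial

variable {κ : Type*} (b : Module.Basis κ ℝ V)

/-- The embedding of `V` into its symmetric algebra, realised as polynomials in a basis. -/
def linPoly : V →ₗ[ℝ] MvPolynomial κ ℝ := b.constr ℝ X

theorem linPoly_basis (k : κ) : linPoly b (b k) = X k := by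
  simp [linPoly]

theorem linPoly_eq_sumSMulX (v : V) : linPoly b v = sumSMulX (b.repr v) := by
  rw [linPoly, Module.Basis.constr_apply, sumSMulX, Finsupp.linearCombination_apply]

theorem linPoly_injective : Function.Injective (linPoly b) := by
  intro v v' h
  apply b.repr.injective
  ext k
  rw [← coeff_sumSMulX, ← coeff_sumSMulX, ← linPoly_eq_sumSMulX, ← linPoly_eq_sumSMulX, h]

theorem irreducible_linPoly {v : V} (hv : v ≠ 0) : Irreducible (linPoly b v) := by
  have hne : b.repr v ≠ 0 := fun h0 => hv (by simpa using h0)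
  rw [linPoly_eq_sumSMulX]
  refine irreducible_sumSMulX _ (Finsupp.support_nonempty_iff.2 hne) fun r hr => ?_
  obtain ⟨k, hk⟩ := Finsupp.ne_iff.1 hne
  refine isUnit_iff_ne_zero.2 ?_
  rintro rfl
  exact hk (by simpa using hr k)

theorem totalDegree_linPoly_le (v : V) : (linPoly b v).totalDegree ≤ 1 := by
  rw [linPoly, Module.Basis.constr_apply]
  refine totalDegree_finsetSum_le fun k _ => (totalDegree_smul_le _ _).trans ?_
  simp

theorem totalDegree_linPoly {v : V} (hv : v ≠ 0) : (linPoly b v).totalDegree = 1 := by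
  refine le_antisymm (totalDegree_linPoly_le b v) (Nat.one_le_iff_ne_zero.2 fun h0 => ?_)
  refine (irreducible_linPoly b hv).not_isUnit (isUnit_iff_totalDegree_of_isReduced.2 ⟨?_, h0⟩)
  rw [isUnit_iff_ne_zero]
  intro hc
  have hC := totalDegree_eq_zero_iff_eq_C.1 h0
  rw [hc, map_zero] at hC
  exact (irreducible_linPoly b hv).ne_zero hC

/-- The action of `W` on the symmetric algebra of `V` extending a linear action on `V`. -/
def polyAct (σ : W →* (V ≃ₗ[ℝ] V)) : W →* (MvPolynomial κ ℝ →ₐ[ℝ] MvPolynomial κ ℝ) :=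
  have apply_linPoly : ∀ w v, aeval (fun k => linPoly b (σ w (b k))) (linPoly b v) =
      linPoly b (σ w v) := fun w v => by
    have : (aeval (fun k => linPoly b (σ w (b k)))).toLinearMap ∘ₗ linPoly b =
        linPoly b ∘ₗ (σ w).toLinearMap := b.ext fun k => by simp [linPoly_basis]
    exact LinearMap.congr_fun this v
  { toFun w := aeval fun k => linPoly b (σ w (b k))
    map_one' := by
      ext k
      simp [linPoly_basis]
    map_mul' u v := by
      ext k : 1
      rw [AlgHom.mul_apply, aeval_X, aeval_X, apply_linPoly, map_mul, LinearEquiv.mul_apply] }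

theorem polyAct_linPoly (σ : W →* (V ≃ₗ[ℝ] V)) (w : W) (v : V) :
    polyAct b σ w (linPoly b v) = linPoly b (σ w v) := by
  have : (polyAct b σ w).toLinearMap ∘ₗ linPoly b = linPoly b ∘ₗ (σ w).toLinearMap :=
    b.ext fun k => by simp [linPoly_basis, polyAct]
  exact LinearMap.congr_fun this v

theorem totalDegree_polyAct_le (σ : W →* (V ≃ₗ[ℝ] V)) (w : W) (p : MvPolynomial κ ℝ) :
    (polyAct b σ w p).totalDegree ≤ p.totalDegree := by
  conv_lhs => rw [p.as_sum, map_sum]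
  refine totalDegree_finsetSum_le fun m hm => ?_
  rw [polyAct, MonoidHom.coe_mk, OneHom.coe_mk, aeval_monomial]
  refine (totalDegree_mul _ _).trans ?_
  rw [algebraMap_eq, totalDegree_C, zero_add]
  refine (totalDegree_finsetProd _ _).trans (le_trans ?_ (le_totalDegree hm))
  refine Finset.sum_le_sum fun k _ => (totalDegree_pow _ _).trans ?_
  exact (Nat.mul_le_mul_left _ (totalDegree_linPoly_le b _)).trans (mul_one _).le

/-- If `w` moves every vector by a multiple of `β`, then it moves every polynomial by a multiple
of `β`. -/
theorem linPoly_dvd_polyAct_sub (σ : W →* (V ≃ₗ[ℝ] V)) {w : W} {β : V}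
    (hw : ∀ z, ∃ c : ℝ, σ w z = z - c • β) (p : MvPolynomial κ ℝ) :
    linPoly b β ∣ polyAct b σ w p - p := by
  induction p using MvPolynomial.induction_on with
  | C r => simp [← algebraMap_eq]
  | add p q hp hq =>
    rw [map_add, add_sub_add_comm]
    exact dvd_add hp hq
  | mul_X p k hp =>
    obtain ⟨c, hc⟩ := hw (b k)
    have hX : polyAct b σ w (X k) = X k - c • linPoly b β := by
      rw [← linPoly_basis b k, polyAct_linPoly, hc, map_sub, map_smul]
    obtain ⟨q, hq⟩ := hp
    refine ⟨q * X k - c • polyAct b σ w p, ?_⟩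
    rw [map_mul, hX, mul_sub, mul_smul_comm]
    simp only [smul_eq_C_mul]
    linear_combination X k * hq

variable {cs} {σ : W →* (V ≃ₗ[ℝ] V)} {Φp : Finset V} {α : Fin n → V} {αv : Fin n → (V →ₗ[ℝ] ℝ)}

theorem IsPositiveSystem_s1.linPoly_dvd_of_act_eq_neg (h : IsPositiveSystem_s1 cs σ Φp α αv) {u : W}
    {i : Fin n} {q : MvPolynomial κ ℝ} (hq : polyAct b σ (u * cs.simple i * u⁻¹) q = -q) :
    linPoly b (σ u (α i)) ∣ q := by
  have hdvd := linPoly_dvd_polyAct_sub b σ (β := σ u (α i))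
    (fun z => ⟨_, h.conj_simple_apply u i z⟩) q
  rw [hq] at hdvd
  obtain ⟨r, hr⟩ := hdvd
  refine ⟨C (-1 / 2) * r, ?_⟩
  have hC : (C (-1 / 2) * 2 : MvPolynomial κ ℝ) = -1 := by
    rw [show (2 : MvPolynomial κ ℝ) = C 2 from (map_ofNat C 2).symm, ← C_mul]
    norm_num
  linear_combination C (-1 / 2) * hr + q * hC

/-- A polynomial negated by `s_i` and `s_j` vanishes if its degree is less than the order of
`s_i s_j`. -/
theorem IsPositiveSystem_s1.eq_zero_of_act_eq_neg (h : IsPositiveSystem_s1 cs σ Φp α αv) {i j : Fin n}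
    {q : MvPolynomial κ ℝ} (hi : polyAct b σ (cs.simple i) q = -q)
    (hj : polyAct b σ (cs.simple j) q = -q)
    (hdeg : q.totalDegree < orderOf (cs.simple i * cs.simple j)) : q = 0 := by
  set d := cs.simple i * cs.simple j with hd
  have hact : ∀ k : ℕ, polyAct b σ (d ^ k * cs.simple i) q = -q := by
    intro k
    induction k with
    | zero => simpa using hi
    | succ k ih =>
      rw [pow_succ', mul_assoc, map_mul, AlgHom.mul_apply, ih, map_neg, hd, map_mul,
        AlgHom.mul_apply, hj, map_neg, hi, neg_neg]
  have hrefl : ∀ k : ℕ, cs.IsReflection (d ^ k * cs.simple i) := by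
    intro k
    induction k using Nat.twoStepInduction with
    | zero => simpa using cs.isReflection_simple i
    | one => exact ⟨cs.simple i, j, by simp [hd]⟩
    | more k ih _ =>
      have hcomm : cs.simple i * d⁻¹ = d * cs.simple i := by simp [hd, mul_assoc]
      convert ih.conj d using 1
      rw [mul_assoc d, mul_assoc (d ^ k), hcomm, ← mul_assoc (d ^ k), ← pow_succ,
        ← mul_assoc, ← pow_succ']
  choose u e hue using hrefl
  have hne : ∀ k, σ (u k) (α (e k)) ≠ 0 := fun k h0 =>
    h.simple_ne_zero (e k) (by simpa using h0)
  have hdvd : ∏ k ∈ Finset.range (orderOf d), linPoly b (σ (u k) (α (e k))) ∣ q := by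
    refine Finset.prod_dvd_of_isRelPrime ?_ fun k _ =>
      h.linPoly_dvd_of_act_eq_neg b (by rw [← hue]; exact hact k)
    intro k hk l hl hkl
    refine ((irreducible_linPoly b (hne k)).isRelPrime_iff_not_dvd).2 fun hdvd => hkl ?_
    obtain ⟨x, hx⟩ := ((irreducible_linPoly b (hne k)).dvd_irreducible_iff_associated
      (irreducible_linPoly b (hne l))).1 hdvd
    obtain ⟨c, -, hc⟩ := isUnit_iff_eq_C_of_isReduced.1 x.isUnit
    have hprop : σ (u l) (α (e l)) = c • σ (u k) (α (e k)) := by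
      apply linPoly_injective b
      rw [← hx, hc, map_smul, smul_eq_C_mul, mul_comm]
    have heq := h.conj_simple_eq_of_apply_eq_smul hprop
    rw [← hue, ← hue, mul_left_inj] at heq
    exact (pow_injOn_Iio_orderOf (by simpa using hl) (by simpa using hk) heq).symm
  by_contra hq
  have hle := totalDegree_le_of_dvd_of_isDomain hdvd hq
  have hprod : ∀ s : Finset ℕ,
      (∏ k ∈ s, linPoly b (σ (u k) (α (e k)))).totalDegree = s.card := by
    intro s
    induction s using Finset.induction_on with
    | empty => simp
    | insert k s hk ih =>
      rw [Finset.prod_insert hk, totalDegree_mul_of_isDomain (irreducible_linPoly b (hne k)).ne_zero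
        (Finset.prod_ne_zero_iff.2 fun l _ => (irreducible_linPoly b (hne l)).ne_zero), ih,
        totalDegree_linPoly b (hne k), Finset.card_insert_of_notMem hk, add_comm]
  rw [hprod, Finset.card_range] at hle
  omega

end PolynomialAction

section BraidRelations

open MvPolynomial

variable {κ : Type*} (b : Module.Basis κ ℝ V) {σ : W →* (V ≃ₗ[ℝ] V)} {α : Fin n → V}

/-- The operators `leftOp` for the symmetric algebra of `V` and the simple roots. -/
abbrev rootOp (σ : W →* (V ≃ₗ[ℝ] V)) (α : Fin n → V) (i : Fin n) :
    Module.End ℝ (W → MvPolynomial κ ℝ) :=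
  leftOp cs (polyAct b σ) (fun i => linPoly b (α i)) i

/-- The composite of the operators `rootOp` along a word. -/
abbrev rootWordOp (σ : W →* (V ≃ₗ[ℝ] V)) (α : Fin n → V) (ω : List (Fin n)) :
    Module.End ℝ (W → MvPolynomial κ ℝ) :=
  wordOp cs (polyAct b σ) (fun i => linPoly b (α i)) ω

theorem totalDegree_rootWordOp_unitFamily_le (ω : List (Fin n)) (w : W) :
    (rootWordOp cs b σ α ω unitFamily w).totalDegree ≤ cs.length w := by
  induction ω generalizing w with
  | nil =>
    by_cases hw : w = 1 <;> simp [rootWordOp, wordOp, unitFamily, hw]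
  | cons i ω ih =>
    simp only [rootWordOp, wordOp, List.map_cons, List.prod_cons, Module.End.mul_apply] at ih ⊢
    rw [leftOp_apply]
    refine (totalDegree_add _ _).trans (max_le ((totalDegree_polyAct_le b σ _ _).trans (ih w)) ?_)
    split_ifs with hd
    · have hd' := cs.isLeftDescent_iff.1 hd
      have h1 := totalDegree_linPoly_le b (α i)
      have h2 := (totalDegree_polyAct_le b σ (cs.simple i) _).trans (ih (cs.simple i * w))
      exact (totalDegree_mul _ _).trans (by omega)
    · simp

variable {cs} {Φp : Finset V} {αv : Fin n → (V →ₗ[ℝ] ℝ)}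

theorem IsPositiveSystem_s1.rootOp_mul_self (h : IsPositiveSystem_s1 cs σ Φp α αv) (i : Fin n) :
    rootOp cs b σ α i * rootOp cs b σ α i = 1 :=
  leftOp_mul_self cs _ _ (fun i => by rw [polyAct_linPoly, h.simple_apply_self, map_neg]) i

theorem IsPositiveSystem_s1.rootWordOp_unitFamily_eq_of_wordProd_eq
    (h : IsPositiveSystem_s1 cs σ Φp α αv) {ω ω' : List (Fin n)}
    (hprod : cs.wordProd ω = cs.wordProd ω') (hlen : ω.length = ω'.length) {w : W}
    (hw : ω.length ≤ cs.length w) :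
    rootWordOp cs b σ α ω unitFamily w = rootWordOp cs b σ α ω' unitFamily w := by
  rcases hw.lt_or_eq with hlt | heq
  · rw [rootWordOp, rootWordOp, wordOp_unitFamily_of_length_lt cs _ _ ω hlt,
      wordOp_unitFamily_of_length_lt cs _ _ ω' (hlen ▸ hlt)]
  · rw [rootWordOp, rootWordOp, wordOp_unitFamily_of_length_eq cs _ _ ω heq,
      wordOp_unitFamily_of_length_eq cs _ _ ω' (hlen ▸ heq), ← hprod]
    split_ifs with hωw
    · have hred : cs.IsReduced ω := by rw [CoxeterSystem.IsReduced, hωw, heq]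
      have hred' : cs.IsReduced ω' := by rw [CoxeterSystem.IsReduced, ← hprod, hωw, ← heq, hlen]
      rw [rootProd_eq_prod_inversions cs _ h (linPoly b) (polyAct_linPoly b σ) ω hred,
        rootProd_eq_prod_inversions cs _ h (linPoly b) (polyAct_linPoly b σ) ω' hred', hprod]
    · rfl

theorem IsPositiveSystem_s1.rootOp_mul_pow_orderOf (h : IsPositiveSystem_s1 cs σ Φp α αv)
    (i j : Fin n) :
    (rootOp cs b σ α i * rootOp cs b σ α j) ^ orderOf (cs.simple i * cs.simple j) = 1 := by
  have := h.finite
  have := Fintype.ofFinite W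
  set m := orderOf (cs.simple i * cs.simple j) with hm
  have hi := h.rootOp_mul_self b i
  have hj := h.rootOp_mul_self b j
  set ω := (List.replicate m [i, j]).flatten with hω
  have hop : rootWordOp cs b σ α ω = (rootOp cs b σ α i * rootOp cs b σ α j) ^ m :=
    prod_map_flatten_replicate_pair _ i j m
  have hone : cs.wordProd ω = 1 :=
    (prod_map_flatten_replicate_pair cs.simple i j m).trans (pow_orderOf_eq_one _)
  have hconji : rootWordOp cs b σ α ω * rootOp cs b σ α i * rootWordOp cs b σ α ω =
      rootOp cs b σ α i := by
    rw [hop, mul_pow_mul_left_mul_mul_pow hi hj]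
  have hconjj : rootWordOp cs b σ α ω * rootOp cs b σ α j * rootWordOp cs b σ α ω =
      rootOp cs b σ α j := by
    rw [hop, mul_pow_mul_right_mul_mul_pow hi hj]
  rw [← hop]
  refine wordOp_eq_one_of_unitFamily cs _ _ hone (funext fun w => ?_)
  induction hk : cs.length w using Nat.strong_induction_on generalizing w with
  | _ k ih =>
    by_cases hw1 : w = 1
    · rw [hw1, wordOp_unitFamily_one]
      simp [unitFamily]
    have hagree : ∀ v, cs.length v < k →
        rootWordOp cs b σ α ω unitFamily v = unitFamily v := fun v hv => ih _ hv v rfl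
    have hzero : (unitFamily : W → MvPolynomial κ ℝ) w = 0 := by simp [unitFamily, hw1]
    rw [hzero]
    rcases lt_or_ge k m with hkm | hkm
    · refine h.eq_zero_of_act_eq_neg b (i := i) (j := j)
        (act_simple_leading_eq_neg cs _ _ hone hagree hconji hw1 hk)
        (act_simple_leading_eq_neg cs _ _ hone hagree hconjj hw1 hk)
        ((totalDegree_rootWordOp_unitFamily_le cs b ω w).trans_lt (hk ▸ hkm))
    · have halt : rootWordOp cs b σ α ω * rootWordOp cs b σ α (alternatingFrom j i m) =
          rootWordOp cs b σ α (alternatingFrom i j m) :=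
        hop ▸ mul_pow_mul_prod_alternatingFrom (f := rootOp cs b σ α) hi hj m
      have hprod : cs.wordProd (alternatingFrom j i m) = cs.wordProd (alternatingFrom i j m) := by
        have := mul_pow_mul_prod_alternatingFrom (cs.simple_mul_simple_self i)
          (cs.simple_mul_simple_self j) m
        rwa [pow_orderOf_eq_one, one_mul] at this
      have happ := congrFun (LinearMap.congr_fun halt unitFamily) w
      rw [Module.End.mul_apply, wordOp_apply_of_agree_below cs _ _ hone hagree _ hw1 hk,
        wordOp_unitFamily_one, one_mul,
        ← h.rootWordOp_unitFamily_eq_of_wordProd_eq b hprod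
          (by rw [length_alternatingFrom, length_alternatingFrom])
          (by rw [length_alternatingFrom, hk]; exact hkm)] at happ
      exact add_eq_left.1 happ

theorem IsPositiveSystem_s1.isLiftable_rootOp (h : IsPositiveSystem_s1 cs σ Φp α αv) :
    M.IsLiftable (rootOp cs b σ α) := fun i j => by
  obtain ⟨c, hc⟩ := orderOf_dvd_of_pow_eq_one (cs.simple_mul_simple_pow i j)
  rw [hc, pow_mul, h.rootOp_mul_pow_orderOf, one_pow]

theorem IsPositiveSystem_s1.rootWordOp_eq_of_wordProd_eq (h : IsPositiveSystem_s1 cs σ Φp α αv)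
    {ω ω' : List (Fin n)} (hprod : cs.wordProd ω = cs.wordProd ω') :
    rootWordOp cs b σ α ω = rootWordOp cs b σ α ω' := by
  have key : ∀ τ, cs.lift ⟨_, h.isLiftable_rootOp b⟩ (cs.wordProd τ) = rootWordOp cs b σ α τ := by
    intro τ
    rw [CoxeterSystem.wordProd, map_list_prod, List.map_map]
    exact congrArg List.prod (List.map_congr_left fun i _ => cs.lift_apply_simple _ i)
  rw [← key, ← key, hprod]

end BraidRelations

section BilleySum

theorem Finset.sum_finset_fin_succ {A : Type*} [AddCommMonoid A] {l : ℕ}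
    (F : Finset (Fin (l + 1)) → A) :
    ∑ s, F s = ∑ s : Finset (Fin l), F (s.map (Fin.succEmb l)) +
      ∑ s : Finset (Fin l), F (insert 0 (s.map (Fin.succEmb l))) := by
  have hinj : Function.Injective (Finset.image (Fin.succ : Fin l → Fin (l + 1))) :=
    Finset.image_injective (Fin.succ_injective l)
  rw [← Finset.powerset_univ, Fin.univ_succ, Finset.cons_eq_insert, Finset.map_eq_image,
    Finset.sum_powerset_insert (by simp), Function.Embedding.coeFn_mk, Finset.powerset_image,
    Finset.sum_image hinj.injOn, Finset.sum_image hinj.injOn, Finset.powerset_univ]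
  simp only [Finset.map_eq_image, Fin.coe_succEmb]

variable (σ : W →* (V ≃ₗ[ℝ] V)) (α : Fin n → V)

theorem betaRoot_cons_zero (i : Fin n) (ω : List (Fin n)) :
    betaRoot cs σ α (i :: ω) (0 : Fin (ω.length + 1)) = α i := by
  simp [betaRoot]

theorem betaRoot_cons_succ (i : Fin n) (ω : List (Fin n)) (j : Fin ω.length) :
    betaRoot cs σ α (i :: ω) j.succ = σ (cs.simple i) (betaRoot cs σ α ω j) := by
  simp [betaRoot, cs.wordProd_cons]

theorem billeySum_cons {A : Type*} [CommRing A] [Algebra ℝ A] (ι : V →ₗ[ℝ] A) (i : Fin n)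
    (ω : List (Fin n)) (w : W) :
    billeySum cs σ α A ι (i :: ω) w =
      billeySum cs σ α A (ι ∘ₗ (σ (cs.simple i)).toLinearMap) ω w +
        if cs.IsLeftDescent w i then
          ι (α i) * billeySum cs σ α A (ι ∘ₗ (σ (cs.simple i)).toLinearMap) ω (cs.simple i * w)
        else 0 := by
  have hsort : ∀ s : Finset (Fin ω.length),
      ((s.map (Fin.succEmb _)).sort (· ≤ ·)).map (i :: ω).get = (s.sort (· ≤ ·)).map ω.get := by
    intro s
    rw [← ((Fin.strictMono_succ).strictMonoOn _).map_finsetSort (f := Fin.succEmb _), List.map_map]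
    rfl
  have hsort' : ∀ s : Finset (Fin ω.length),
      ((insert 0 (s.map (Fin.succEmb _))).sort (· ≤ ·)).map (i :: ω).get =
        i :: (s.sort (· ≤ ·)).map ω.get := by
    intro s
    rw [Finset.sort_insert _ (fun _ _ => Fin.zero_le _) (by simp), List.map_cons, hsort]
    rfl
  have hprod : ∀ s : Finset (Fin ω.length),
      ∏ j ∈ s.map (Fin.succEmb _), ι (betaRoot cs σ α (i :: ω) j) =
        ∏ j ∈ s, (ι ∘ₗ (σ (cs.simple i)).toLinearMap) (betaRoot cs σ α ω j) := by
    intro s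
    rw [Finset.prod_map]
    exact Finset.prod_congr rfl fun j _ => congrArg ι (betaRoot_cons_succ cs σ α i ω j)
  have hprod' : ∀ s : Finset (Fin ω.length),
      ∏ j ∈ insert 0 (s.map (Fin.succEmb _)), ι (betaRoot cs σ α (i :: ω) j) =
        ι (α i) * ∏ j ∈ s, (ι ∘ₗ (σ (cs.simple i)).toLinearMap) (betaRoot cs σ α ω j) := by
    intro s
    rw [Finset.prod_insert (by simp), hprod, betaRoot_cons_zero]
  have hcond : ∀ s : Finset (Fin ω.length),
      (cs.wordProd (i :: (s.sort (· ≤ ·)).map ω.get) = w ∧ s.card + 1 = cs.length w) ↔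
        cs.IsLeftDescent w i ∧ cs.wordProd ((s.sort (· ≤ ·)).map ω.get) = cs.simple i * w ∧
          s.card = cs.length (cs.simple i * w) := by
    intro s
    have hle := cs.length_wordProd_le ((s.sort (· ≤ ·)).map ω.get)
    rw [List.length_map, Finset.length_sort] at hle
    rw [cs.wordProd_cons, cs.isLeftDescent_iff]
    constructor
    · rintro ⟨rfl, hcard⟩
      have hlen := cs.length_simple_mul (cs.wordProd ((s.sort (· ≤ ·)).map ω.get)) i
      rw [cs.simple_mul_simple_cancel_left]
      exact ⟨by omega, rfl, by omega⟩
    · rintro ⟨hd, hw, hcard⟩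
      exact ⟨by rw [hw, cs.simple_mul_simple_cancel_left], by omega⟩
  unfold billeySum
  refine (Finset.sum_finset_fin_succ (l := ω.length) _).trans ?_
  congr 1
  · exact Finset.sum_congr rfl fun s _ => if_congr
      (and_congr (Eq.congr_left (congrArg cs.wordProd (hsort s)))
        (Eq.congr_left (Finset.card_map _))) (hprod s) rfl
  · refine (Finset.sum_congr rfl fun s _ => if_congr
      ((and_congr (Eq.congr_left (congrArg cs.wordProd (hsort' s)))
        (Eq.congr_left ?_)).trans (hcond s)) (hprod' s) rfl).trans ?_
    · exact (Finset.card_insert_of_notMem (by simp)).trans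
        (congrArg (· + 1) (Finset.card_map _))
    · by_cases hd : cs.IsLeftDescent w i
      · simp only [hd, true_and, if_true, Finset.mul_sum, mul_ite, mul_zero]
      · simp only [hd, false_and, if_false, Finset.sum_const_zero]

theorem billeySum_eq_aeval_rootWordOp {κ : Type*} (b : Module.Basis κ ℝ V) {A : Type*} [CommRing A]
    [Algebra ℝ A] (ι : V →ₗ[ℝ] A) (ω : List (Fin n)) (w : W) :
    billeySum cs σ α A ι ω w =
      MvPolynomial.aeval (fun k => ι (b k)) (rootWordOp cs b σ α ω unitFamily w) := by
  have hlin : ∀ (ι : V →ₗ[ℝ] A) (v : V),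
      MvPolynomial.aeval (fun k => ι (b k)) (linPoly b v) = ι v := by
    intro ι v
    have : (MvPolynomial.aeval (fun k => ι (b k))).toLinearMap ∘ₗ linPoly b = ι :=
      b.ext fun k => by simp [linPoly_basis]
    exact LinearMap.congr_fun this v
  have hact : ∀ (ι : V →ₗ[ℝ] A) (u : W) (p : MvPolynomial κ ℝ),
      MvPolynomial.aeval (fun k => ι (b k)) (polyAct b σ u p) =
        MvPolynomial.aeval (fun k => (ι ∘ₗ (σ u).toLinearMap) (b k)) p := by
    intro ι u p
    rw [← AlgHom.comp_apply]
    congr 1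
    ext k
    rw [AlgHom.comp_apply, ← linPoly_basis b k, polyAct_linPoly, hlin, hlin]
    rfl
  induction ω generalizing ι w with
  | nil =>
    have huniv : (Finset.univ : Finset (Finset (Fin ([] : List (Fin n)).length))) = {∅} := rfl
    have hnil : billeySum cs σ α A ι [] w = if 1 = w ∧ 0 = cs.length w then 1 else 0 := by
      rw [billeySum, huniv, Finset.sum_singleton]
      simp
    rw [hnil]
    by_cases hw : w = 1
    · simp [hw, rootWordOp, wordOp, unitFamily]
    · simp [hw, Ne.symm hw, rootWordOp, wordOp, unitFamily]
  | cons i ω ih =>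
    rw [billeySum_cons, ih, ih]
    simp only [rootWordOp, wordOp, List.map_cons, List.prod_cons, Module.End.mul_apply]
    rw [leftOp_apply, map_add, hact]
    congr 1
    split_ifs
    · rw [map_mul, hlin, hact]
    · rw [map_zero]

end BilleySum

theorem billeySum_independent_of_reduced_word
    -- the reflection representation of W on V, faithful (W is the Weyl group of Φ)
    (σ : W →* (V ≃ₗ[ℝ] V)) (hfaith : Function.Injective σ)
    -- positive roots, simple roots, simple coroots
    (Φp : Finset V) (α : Fin n → V) (αv : Fin n → (V →ₗ[ℝ] ℝ))
    (hαmem : ∀ i, α i ∈ Φp)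
    -- the roots span V
    (hspan : Submodule.span ℝ (Φp : Set V) = ⊤)
    -- reflection formula s_i(v) = v − ⟨v, α_i^∨⟩ α_i, with ⟨α_i, α_i^∨⟩ = 2
    (hrefl : ∀ (i : Fin n) (v : V), σ (cs.simple i) v = v - αv i v • α i)
    (hpairself : ∀ i, αv i (α i) = 2)
    -- crystallographic condition
    (hcrys : ∀ i j, ∃ m : ℤ, αv i (α j) = (m : ℝ))
    -- s_i permutes the positive roots other than α_i
    (hperm : ∀ i, ∀ b ∈ Φp, b ≠ α i → σ (cs.simple i) b ∈ Φp)
    -- Φ⁺ and −Φ⁺ are disjoint, and the root system is reduced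
    (hdisj : ∀ b ∈ Φp, -b ∉ Φp)
    (hreduced : ∀ b ∈ Φp, b + b ∉ Φp)
    -- the target algebra: Sym(V) via its universal property
    (A : Type*) [CommRing A] [Algebra ℝ A] (ι : V →ₗ[ℝ] A)
    -- two reduced expressions of y
    (y : W) (ω ω' : List (Fin n))
    (hω : cs.wordProd ω = y) (hωred : ω.length = cs.length y)
    (hω' : cs.wordProd ω' = y) (hω'red : ω'.length = cs.length y)
    (w : W) :
    billeySum cs σ α A ι ω w = billeySum cs σ α A ι ω' w := by
  have h : IsPositiveSystem_s1 cs σ Φp α αv :=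
    ⟨hfaith, hαmem, hspan, hrefl, hpairself, hperm, hdisj⟩
  have b := Module.Basis.ofVectorSpace ℝ V
  rw [billeySum_eq_aeval_rootWordOp cs σ α b, billeySum_eq_aeval_rootWordOp cs σ α b,
    h.rootWordOp_eq_of_wordProd_eq b (hω.trans hω'.symm)]
end
end
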